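/- arXiv:2512.17813 — 4 statements merged into one kernel-verified Lean document; each statement's English description precedes it below -/
import Mathlib

section
/- Let n ≥ 1 and let f : ℝⁿ → [0,∞) be locally Lebesgue-integrable. Suppose there exist R₁ > 0 and a non-decreasing C¹ function θ : [R₁,∞) → (0,∞) with ∫_{R₁}^∞ ds/(s·θ(s)) = ∞ such that ∫_{B_R} f dx ≤ R²·θ(R) for all R ≥ R₁. Then there exist Lipschitz functions φ_j : ℝⁿ → [0,1], each with compact support, and radii R_j → ∞, such that φ_j ≡ 1 on B_{R_j} for every j and ∫_{ℝⁿ} f(x)·|∇φ_j(x)|² dx → 0 as j → ∞ (so in particular φ_j → 1 in W^{1,∞}_loc(ℝⁿ)). -/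
open MeasureTheory Set Metric Filter
open scoped RealInnerProductSpace Topology ENNReal

noncomputable section

/-- Radial ramp: `0` for `‖x‖ ≤ r`, `1` for `‖x‖ ≥ 2r`. -/
def ramp {n : ℕ} (r : ℝ) (x : EuclideanSpace ℝ (Fin n)) : ℝ :=
  max 0 (min 1 ((‖x‖ - r) / r))

lemma ramp_mem {n : ℕ} (r : ℝ) (x : EuclideanSpace ℝ (Fin n)) :
    0 ≤ ramp r x ∧ ramp r x ≤ 1 :=
  ⟨le_max_left _ _, max_le zero_le_one (min_le_left _ _)⟩

lemma ramp_zero {n : ℕ} {r : ℝ} (hr : 0 < r) {x : EuclideanSpace ℝ (Fin n)} (h : ‖x‖ ≤ r) :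
    ramp r x = 0 :=
  max_eq_left ((min_le_right _ _).trans (div_nonpos_of_nonpos_of_nonneg (by linarith) hr.le))

lemma ramp_one {n : ℕ} {r : ℝ} (hr : 0 < r) {x : EuclideanSpace ℝ (Fin n)} (h : 2 * r ≤ ‖x‖) :
    ramp r x = 1 := by
  have : 1 ≤ (‖x‖ - r) / r := by rw [le_div_iff₀ hr]; linarith
  simp [ramp, min_eq_left this]

lemma ramp_lip {n : ℕ} {r : ℝ} (hr : 0 < r) (x y : EuclideanSpace ℝ (Fin n)) :
    |ramp r x - ramp r y| ≤ r⁻¹ * dist x y := by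
  have h1 : |ramp r x - ramp r y| ≤ |(‖x‖ - r) / r - (‖y‖ - r) / r| := by
    unfold ramp
    refine (abs_max_sub_max_le_max _ _ _ _).trans ?_
    refine max_le (by simp) ?_
    refine (abs_min_sub_min_le_max _ _ _ _).trans ?_
    exact max_le (by simp) le_rfl
  refine h1.trans ?_
  have : (‖x‖ - r) / r - (‖y‖ - r) / r = r⁻¹ * (‖x‖ - ‖y‖) := by field_simp; ring
  rw [this, abs_mul, abs_of_pos (inv_pos.2 hr), dist_eq_norm]
  exact mul_le_mul_of_nonneg_left (abs_norm_sub_norm_le x y) (inv_pos.2 hr).le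

/-- The cut-off function with weights `c`. -/
def cutoff {n : ℕ} (r c : ℕ → ℝ) (m M : ℕ) (x : EuclideanSpace ℝ (Fin n)) : ℝ :=
  1 - ∑ i ∈ Finset.Ico m M, c i * ramp (r i) x

lemma cutoff_diff {n : ℕ} {r c : ℕ → ℝ} (hc : ∀ i, 0 ≤ c i)
    (m M : ℕ) (x y : EuclideanSpace ℝ (Fin n)) :
    |cutoff r c m M x - cutoff r c m M y| ≤
      ∑ i ∈ Finset.Ico m M, c i * |ramp (r i) x - ramp (r i) y| := by
  have : cutoff r c m M x - cutoff r c m M y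
      = ∑ i ∈ Finset.Ico m M, c i * (ramp (r i) y - ramp (r i) x) := by
    simp only [cutoff, mul_sub, Finset.sum_sub_distrib]; ring
  rw [this]
  refine (Finset.abs_sum_le_sum_abs _ _).trans (Finset.sum_le_sum fun i _ => ?_)
  rw [abs_mul, abs_of_nonneg (hc i), abs_sub_comm]

lemma cutoff_lip {n : ℕ} {r c : ℕ → ℝ} (hr : ∀ i, 0 < r i) (hc : ∀ i, 0 ≤ c i) (m M : ℕ) :
    ∃ K, LipschitzWith K (cutoff (n := n) r c m M) := by
  refine ⟨Real.toNNReal (∑ i ∈ Finset.Ico m M, c i * (r i)⁻¹),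
    LipschitzWith.of_dist_le_mul fun x y => ?_⟩
  rw [Real.coe_toNNReal _ (Finset.sum_nonneg fun i _ => mul_nonneg (hc i) (inv_pos.2 (hr i)).le),
    Real.dist_eq, Finset.sum_mul]
  refine (cutoff_diff hc m M x y).trans (Finset.sum_le_sum fun i _ => ?_)
  rw [mul_assoc]
  exact mul_le_mul_of_nonneg_left (ramp_lip (hr i) x y) (hc i)

/-- Gradient bound in the open annulus `k`. -/
lemma cutoff_grad {n : ℕ} {r c : ℕ → ℝ} (hr : ∀ i, 0 < r i) (hc : ∀ i, 0 ≤ c i)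
    (h2 : ∀ i, r (i + 1) = 2 * r i) (hm : Monotone r) (m M : ℕ)
    (x : EuclideanSpace ℝ (Fin n)) (hx : ∀ i, ‖x‖ ≠ r i) (htop : ∃ i, ‖x‖ < r i) :
    ‖gradient (cutoff r c m M) x‖ ^ 2 ≤
      ∑ i ∈ Finset.Ico m M, (c i * (r i)⁻¹) ^ 2 *
        (ball (0 : EuclideanSpace ℝ (Fin n)) (r (i + 1))).indicator 1 x := by
  classical
  have hnn : ∀ i ∈ Finset.Ico m M, 0 ≤ (c i * (r i)⁻¹) ^ 2 *
        (ball (0 : EuclideanSpace ℝ (Fin n)) (r (i + 1))).indicator (1 : EuclideanSpace ℝ (Fin n) → ℝ) x := fun i _ =>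
    mul_nonneg (sq_nonneg _) (indicator_nonneg (fun _ _ => zero_le_one) _)
  have hgn : ‖gradient (cutoff r c m M) x‖ = ‖fderiv ℝ (cutoff r c m M) x‖ := by
    simp [gradient]
  rw [hgn]
  -- key: local Lipschitz bound
  have key : ∀ (U : Set (EuclideanSpace ℝ (Fin n))) (k : ℕ), U ∈ 𝓝 x →
      (∀ i, i ≠ k → ∀ y ∈ U, ∀ z ∈ U, ramp (r i) y = ramp (r i) z) →
      ‖fderiv ℝ (cutoff r c m M) x‖ ≤ if k ∈ Finset.Ico m M then c k * (r k)⁻¹ else 0 := by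
    intro U k hU hc'
    set L : ℝ := if k ∈ Finset.Ico m M then c k * (r k)⁻¹ else 0 with hL
    have hL0 : 0 ≤ L := by
      rw [hL]; split_ifs
      · exact mul_nonneg (hc k) (inv_pos.2 (hr k)).le
      · exact le_rfl
    have hlip : LipschitzOnWith (Real.toNNReal L) (cutoff r c m M) U := by
      refine LipschitzOnWith.of_dist_le_mul fun y hy z hz => ?_
      rw [Real.coe_toNNReal _ hL0, Real.dist_eq]
      refine (cutoff_diff hc m M y z).trans ?_
      have hz0 : ∀ i, i ≠ k → c i * |ramp (r i) y - ramp (r i) z| = 0 := by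
        intro i hi
        rw [hc' i hi y hy z hz]; simp
      by_cases hk : k ∈ Finset.Ico m M
      · rw [Finset.sum_eq_single_of_mem k hk (fun i _ hi => hz0 i hi), hL, if_pos hk, mul_assoc]
        exact mul_le_mul_of_nonneg_left (ramp_lip (hr k) y z) (hc k)
      · rw [Finset.sum_eq_zero (fun i hi => hz0 i (fun h => hk (h ▸ hi))), hL, if_neg hk]
        simp
    have := norm_fderiv_le_of_lipschitzOn ℝ hU hlip
    rwa [Real.coe_toNNReal _ hL0] at this
  have hex := htop
  obtain ⟨k, hk, hkmin⟩ : ∃ k, ‖x‖ < r k ∧ ∀ i < k, r i < ‖x‖ := by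
    refine ⟨Nat.find htop, Nat.find_spec htop, fun i hi => ?_⟩
    exact lt_of_le_of_ne (not_lt.1 (Nat.find_min htop hi)) (hx i).symm
  rcases k with _ | k
  · -- inside the smallest ball
    have hU : ball (0 : EuclideanSpace ℝ (Fin n)) (r 0) ∈ 𝓝 x :=
      isOpen_ball.mem_nhds (by simpa using hk)
    have hz : ∀ i, ∀ y ∈ ball (0 : EuclideanSpace ℝ (Fin n)) (r 0), ramp (r i) y = 0 := by
      intro i y hy
      refine ramp_zero (hr i) ?_
      have : ‖y‖ < r 0 := by simpa using hy
      exact this.le.trans (hm (Nat.zero_le i))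
    have := key _ M hU (fun i _ y hy z hz' => by rw [hz i y hy, hz i z hz'])
    rw [if_neg (by simp)] at this
    have h0 : ‖fderiv ℝ (cutoff r c m M) x‖ = 0 := le_antisymm this (norm_nonneg _)
    rw [h0]
    simpa using Finset.sum_nonneg hnn
  · have hl : r k < ‖x‖ := hkmin k (Nat.lt_succ_self k)
    have hU : {y : EuclideanSpace ℝ (Fin n) | r k < ‖y‖ ∧ ‖y‖ < r (k + 1)} ∈ 𝓝 x :=
      ((isOpen_lt continuous_const continuous_norm).inter
        (isOpen_lt continuous_norm continuous_const)).mem_nhds ⟨hl, hk⟩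
    have := key _ k hU (fun i hi y hy z hz => by
      rcases lt_or_gt_of_ne hi with h | h
      · have : 2 * r i ≤ r k := by rw [← h2]; exact hm h
        rw [ramp_one (hr i) (this.trans hy.1.le), ramp_one (hr i) (this.trans hz.1.le)]
      · have : r (k + 1) ≤ r i := hm h
        rw [ramp_zero (hr i) (hy.2.le.trans this), ramp_zero (hr i) (hz.2.le.trans this)])
    by_cases hkm : k ∈ Finset.Ico m M
    · rw [if_pos hkm] at this
      refine le_trans ?_ (Finset.single_le_sum hnn hkm)
      rw [indicator_of_mem (by simpa using hk)]
      simpa using pow_le_pow_left₀ (norm_nonneg _) this 2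
    · rw [if_neg hkm] at this
      have h0 : ‖fderiv ℝ (cutoff r c m M) x‖ = 0 := le_antisymm this (norm_nonneg _)
      rw [h0]
      simpa using Finset.sum_nonneg hnn

lemma cutoff_energy {n : ℕ} (hn : 1 ≤ n) {r c : ℕ → ℝ} (hr : ∀ i, 0 < r i) (hc : ∀ i, 0 ≤ c i)
    (h2 : ∀ i, r (i + 1) = 2 * r i) (hm : Monotone r) (ht : Tendsto r atTop atTop) (m M : ℕ)
    (f : EuclideanSpace ℝ (Fin n) → ℝ) (hf0 : ∀ x, 0 ≤ f x)
    (hfloc : LocallyIntegrable f volume) :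
    ∫ x, f x * ‖gradient (cutoff r c m M) x‖ ^ 2 ≤
      ∑ i ∈ Finset.Ico m M, (c i * (r i)⁻¹) ^ 2 *
        ∫ x in ball (0 : EuclideanSpace ℝ (Fin n)) (r (i + 1)), f x := by
  have : Nonempty (Fin n) := ⟨⟨0, hn⟩⟩
  have hint : ∀ R : ℝ, IntegrableOn f (ball (0 : EuclideanSpace ℝ (Fin n)) R) volume := fun R =>
    (hfloc.integrableOn_isCompact (isCompact_closedBall 0 R)).mono_set ball_subset_closedBall
  have hI : ∀ i ∈ Finset.Ico m M, Integrable (fun x => (c i * (r i)⁻¹) ^ 2 *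
      (ball (0 : EuclideanSpace ℝ (Fin n)) (r (i + 1))).indicator f x) volume := fun i _ =>
    ((integrable_indicator_iff measurableSet_ball).2 (hint _)).const_mul _
  have hs : ∀ i, ∀ᵐ x : EuclideanSpace ℝ (Fin n), ‖x‖ ≠ r i := by
    intro i
    have := Measure.addHaar_sphere (volume : Measure (EuclideanSpace ℝ (Fin n))) 0 (r i)
    filter_upwards [measure_eq_zero_iff_ae_notMem.1 this] with x hx
    simpa using hx
  calc ∫ x, f x * ‖gradient (cutoff r c m M) x‖ ^ 2
      ≤ ∫ x, ∑ i ∈ Finset.Ico m M, (c i * (r i)⁻¹) ^ 2 *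
        (ball (0 : EuclideanSpace ℝ (Fin n)) (r (i + 1))).indicator f x := by
        refine integral_mono_of_nonneg
          (Eventually.of_forall fun x => mul_nonneg (hf0 x) (sq_nonneg _))
          (integrable_finsetSum _ hI) ?_
        filter_upwards [ae_all_iff.2 hs] with x hx
        have := mul_le_mul_of_nonneg_left
          (cutoff_grad hr hc h2 hm m M x hx (ht.eventually_gt_atTop ‖x‖).exists) (hf0 x)
        refine this.trans (le_of_eq ?_)
        rw [Finset.mul_sum]
        refine Finset.sum_congr rfl fun i _ => ?_
        by_cases hxi : x ∈ ball (0 : EuclideanSpace ℝ (Fin n)) (r (i + 1))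
        · simp only [indicator_of_mem hxi, Pi.one_apply]; ring
        · simp only [indicator_of_notMem hxi]; ring
    _ = _ := by
        rw [integral_finsetSum _ hI]
        refine Finset.sum_congr rfl fun i _ => ?_
        rw [integral_const_mul, integral_indicator measurableSet_ball]

lemma dyadic_div (R₁ : ℝ) (hR₁ : 0 < R₁)
    (θ : ℝ → ℝ)
    (hθC : ContinuousOn θ (Ici R₁))
    (hθpos : ∀ s ∈ Ici R₁, 0 < θ s)
    (hθmono : MonotoneOn θ (Ici R₁)) (r : ℕ → ℝ) (hr0 : r 0 = R₁)
    (hrR : ∀ i, R₁ ≤ r i) (h2 : ∀ i, r (i + 1) = 2 * r i) (N : ℕ) :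
    ∫ s in R₁..(r N), (s * θ s)⁻¹ ≤ ∑ k ∈ Finset.range N, (θ (r k))⁻¹ := by
  have hcont : ContinuousOn (fun s => (s * θ s)⁻¹) (Ici R₁) :=
    (continuousOn_id.mul hθC).inv₀ fun s hs =>
      (mul_pos (hR₁.trans_le hs) (hθpos s hs)).ne'
  have hII : ∀ a b, R₁ ≤ a → R₁ ≤ b →
      IntervalIntegrable (fun s => (s * θ s)⁻¹) volume a b := fun a b ha hb =>
    (hcont.mono fun s hs => (le_min ha hb).trans hs.1).intervalIntegrable
  induction N with
  | zero => simp [hr0]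
  | succ N ih =>
    have hrN : 0 < r N := hR₁.trans_le (hrR N)
    have hle : r N ≤ r (N + 1) := by rw [h2]; linarith
    rw [Finset.sum_range_succ, ← intervalIntegral.integral_add_adjacent_intervals
      (hII _ _ le_rfl (hrR N)) (hII _ _ (hrR N) (hrR (N + 1)))]
    refine add_le_add ih ?_
    have hp := hθpos _ (hrR N)
    calc ∫ s in (r N)..(r (N + 1)), (s * θ s)⁻¹
        ≤ ∫ s in (r N)..(r (N + 1)), (r N * θ (r N))⁻¹ := by
          refine intervalIntegral.integral_mono_on hle (hII _ _ (hrR N) (hrR (N + 1)))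
            intervalIntegrable_const fun s hs => ?_
          have hsR : s ∈ Ici R₁ := (hrR N).trans hs.1
          exact inv_anti₀ (mul_pos hrN hp)
            (mul_le_mul hs.1 (hθmono (hrR N) hsR hs.1) hp.le (hrN.le.trans hs.1))
      _ = (θ (r N))⁻¹ := by
          rw [intervalIntegral.integral_const, h2, smul_eq_mul]
          field_simp
          ring

/-- The generalized logarithmic cut-off lemma (Lemma 2.1 of the paper) in `ℝⁿ`. -/
theorem logarithmic_cutoff_trick
    (n : ℕ) (hn : 1 ≤ n)
    (f : EuclideanSpace ℝ (Fin n) → ℝ)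
    (hf0 : ∀ x, 0 ≤ f x)
    (hfloc : LocallyIntegrable f volume)
    (R₁ : ℝ) (hR₁ : 0 < R₁)
    (θ : ℝ → ℝ)
    (hθC1 : ContDiffOn ℝ 1 θ (Ici R₁))
    (hθpos : ∀ s ∈ Ici R₁, 0 < θ s)
    (hθmono : MonotoneOn θ (Ici R₁))
    (hθdiv : Tendsto (fun T => ∫ s in R₁..T, (s * θ s)⁻¹) atTop atTop)
    (hbound : ∀ R ≥ R₁, ∫ x in Metric.ball (0 : EuclideanSpace ℝ (Fin n)) R, f x ≤ R ^ 2 * θ R) :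
    ∃ (φ : ℕ → EuclideanSpace ℝ (Fin n) → ℝ) (Rj : ℕ → ℝ),
      (∀ j, ∃ K, LipschitzWith K (φ j)) ∧
      (∀ j, HasCompactSupport (φ j)) ∧
      (∀ j x, φ j x ∈ Icc (0 : ℝ) 1) ∧
      Tendsto Rj atTop atTop ∧
      (∀ j, ∀ x ∈ Metric.ball (0 : EuclideanSpace ℝ (Fin n)) (Rj j), φ j x = 1) ∧
      Tendsto (fun j => ∫ x, f x * ‖gradient (φ j) x‖ ^ 2) atTop (nhds 0) := by
  set r : ℕ → ℝ := fun k => 2 ^ k * R₁ with hrdef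
  have hr : ∀ i, 0 < r i := fun i => by positivity
  have hr0 : r 0 = R₁ := by simp [hrdef]
  have h2 : ∀ i, r (i + 1) = 2 * r i := fun i => by simp only [hrdef]; ring
  have hm : Monotone r := monotone_nat_of_le_succ fun i => by rw [h2]; linarith [hr i]
  have hrR : ∀ i, R₁ ≤ r i := fun i => hr0 ▸ hm (Nat.zero_le i)
  have ht : Tendsto r atTop atTop :=
    (tendsto_pow_atTop_atTop_of_one_lt one_lt_two).atTop_mul_const hR₁
  have hp : ∀ i, 0 < θ (r i) := fun i => hθpos _ (hrR i)
  have hdiv : Tendsto (fun N => ∑ k ∈ Finset.range N, (θ (r k))⁻¹) atTop atTop :=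
    tendsto_atTop_mono
      (dyadic_div R₁ hR₁ θ hθC1.continuousOn hθpos hθmono r hr0 hrR h2) (hθdiv.comp ht)
  have hM : ∀ j : ℕ, ∃ M, (j : ℝ) + 1 ≤ ∑ i ∈ Finset.Ico j M, (θ (r (i + 1)))⁻¹ := by
    intro j
    obtain ⟨N, hN1, hN2⟩ := ((hdiv.eventually_ge_atTop
      ((j : ℝ) + 1 + ∑ k ∈ Finset.range (j + 1), (θ (r k))⁻¹)).and
      (eventually_ge_atTop (j + 1))).exists
    obtain ⟨M, rfl⟩ : ∃ M, N = M + 1 := ⟨N - 1, by omega⟩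
    refine ⟨M, ?_⟩
    rw [Finset.sum_Ico_add' (fun k => (θ (r k))⁻¹) j M 1, Finset.sum_Ico_eq_sub _ hN2]
    linarith
  choose M hM using hM
  set S : ℕ → ℝ := fun j => ∑ i ∈ Finset.Ico j (M j), (θ (r (i + 1)))⁻¹ with hS
  have hSj : ∀ j : ℕ, (j : ℝ) + 1 ≤ S j := hM
  have hS0 : ∀ j, 0 < S j := fun j => lt_of_lt_of_le (by positivity) (hSj j)
  set c : ℕ → ℕ → ℝ := fun j i => (θ (r (i + 1)))⁻¹ / S j with hcdef
  have hc : ∀ j i, 0 ≤ c j i := fun j i => (div_pos (inv_pos.2 (hp _)) (hS0 j)).le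
  have hcsum : ∀ j, ∑ i ∈ Finset.Ico j (M j), c j i = 1 := fun j => by
    simp only [hcdef]
    rw [← Finset.sum_div]
    exact div_self (hS0 j).ne'
  refine ⟨fun j => cutoff r (c j) j (M j), r, fun j => cutoff_lip hr (hc j) _ _, fun j => ?_,
    fun j x => ?_, ht, fun j x hx => ?_, ?_⟩
  · refine HasCompactSupport.intro (isCompact_closedBall 0 (r (M j))) fun x hx => ?_
    have hx' : r (M j) < ‖x‖ := by simpa using hx
    have : ∑ i ∈ Finset.Ico j (M j), c j i * ramp (r i) x = ∑ i ∈ Finset.Ico j (M j), c j i := by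
      refine Finset.sum_congr rfl fun i hi => ?_
      rw [ramp_one (hr i), mul_one]
      rw [← h2]
      exact (hm (Finset.mem_Ico.1 hi).2).trans hx'.le
    simp only [cutoff]
    rw [this, hcsum, sub_self]
  · have h1 : 0 ≤ ∑ i ∈ Finset.Ico j (M j), c j i * ramp (r i) x :=
      Finset.sum_nonneg fun i _ => mul_nonneg (hc j i) (ramp_mem _ _).1
    have h3 : ∑ i ∈ Finset.Ico j (M j), c j i * ramp (r i) x ≤ 1 := by
      rw [← hcsum j]
      exact Finset.sum_le_sum fun i _ => mul_le_of_le_one_right (hc j i) (ramp_mem _ _).2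
    simp only [cutoff, mem_Icc]
    constructor <;> linarith
  · have hx' : ‖x‖ < r j := by simpa using hx
    simp only [cutoff]
    rw [Finset.sum_eq_zero, sub_zero]
    intro i hi
    rw [ramp_zero (hr i) (hx'.le.trans (hm (Finset.mem_Ico.1 hi).1)), mul_zero]
  · have hlim : Tendsto (fun j : ℕ => 4 * (1 / ((j : ℝ) + 1))) atTop (𝓝 0) := by
      simpa using tendsto_one_div_add_atTop_nhds_zero_nat.const_mul (4 : ℝ)
    refine squeeze_zero (fun j => integral_nonneg fun x => mul_nonneg (hf0 x) (sq_nonneg _))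
      (fun j => ?_) hlim
    refine (cutoff_energy hn hr (hc j) h2 hm ht j (M j) f hf0 hfloc).trans ?_
    calc _ ≤ ∑ i ∈ Finset.Ico j (M j), 4 / S j * c j i := by
          refine Finset.sum_le_sum fun i _ => ?_
          refine (mul_le_mul_of_nonneg_left (hbound _ (hrR (i + 1))) (sq_nonneg _)).trans
            (le_of_eq ?_)
          have e1 := (hp (i + 1)).ne'
          have e2 := (hS0 j).ne'
          have e3 := (hr i).ne'
          have e4 : c j i = (θ (r (i + 1)))⁻¹ / S j := rfl
          rw [e4]
          generalize θ (r (i + 1)) = t at *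
          rw [h2]
          generalize S j = s at *
          generalize r i = q at *
          field_simp
          norm_num
      _ = 4 / S j := by rw [← Finset.mul_sum, hcsum, mul_one]
      _ ≤ 4 * (1 / ((j : ℝ) + 1)) := by
          rw [mul_one_div]
          exact div_le_div_of_nonneg_left (by norm_num) (by positivity) (hSj j)
end
end

section
/- Let (X, μ) be a measure space, let g : X → [0,∞) and ρ : X → [0,∞) be measurable, and let V : (0,∞) → [0,∞) be continuous with ∫_{{ρ ≤ R}} g dμ ≤ V(R) for every R > 0. Then for every R ≥ 1, ∫_{{√R ≤ ρ ≤ R}} (g/ρ²) dμ ≤ 2·( V(R)/R² + ∫_{√R}^{R} V(σ)·σ^{−3} dσ ). -/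
open MeasureTheory Set Metric Filter
open scoped RealInnerProductSpace Topology ENNReal

noncomputable section

/-- The abstract annulus estimate (Proposition 2.6 of the paper). -/
theorem annulus_estimate
    {X : Type*} [MeasurableSpace X] (μ : Measure X)
    (g ρ : X → ℝ) (hg : Measurable g) (hρ : Measurable ρ)
    (hg0 : ∀ x, 0 ≤ g x) (hρ0 : ∀ x, 0 ≤ ρ x)
    (V : ℝ → ℝ) (hVc : ContinuousOn V (Ioi 0)) (hV0 : ∀ R > (0 : ℝ), 0 ≤ V R)
    (hbound : ∀ R > (0 : ℝ),
      ∫⁻ x in {x | ρ x ≤ R}, ENNReal.ofReal (g x) ∂μ ≤ ENNReal.ofReal (V R)) :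
    ∀ R ≥ (1 : ℝ),
      ∫⁻ x in {x | Real.sqrt R ≤ ρ x ∧ ρ x ≤ R}, ENNReal.ofReal (g x / ρ x ^ 2) ∂μ
        ≤ ENNReal.ofReal (2 * (V R / R ^ 2 + ∫ σ in Real.sqrt R..R, V σ / σ ^ 3)) := by
  intro R hR
  have hs1 : 1 ≤ Real.sqrt R := Real.one_le_sqrt.mpr hR
  have hsR : Real.sqrt R ≤ R := by
    have := Real.sq_sqrt (show (0:ℝ) ≤ R by linarith)
    nlinarith
  have hRpos : 0 < R := by linarith
  set A : Set X := {x | Real.sqrt R ≤ ρ x ∧ ρ x ≤ R} with hA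
  have hAm : MeasurableSet A :=
    (measurableSet_le measurable_const hρ).inter (measurableSet_le hρ measurable_const)
  set ν : Measure X := (μ.restrict A).withDensity (fun x => ENNReal.ofReal (g x)) with hν
  have hνle : ∀ σ > 0, ν {x | ρ x ≤ σ} ≤ ENNReal.ofReal (V σ) := by
    intro σ hσ
    refine le_trans ?_ (hbound σ hσ)
    rw [hν, withDensity_apply _ (measurableSet_le hρ measurable_const)]
    exact lintegral_mono' (Measure.restrict_mono_measure Measure.restrict_le_self _) le_rfl
  have hmem : ∀ᵐ x ∂ν, x ∈ A :=
    (withDensity_absolutelyContinuous _ _).ae_le (ae_restrict_mem hAm)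
  have hνuniv : ν univ ≤ ENNReal.ofReal (V R) := by
    refine le_trans (measure_mono_ae ?_) (hνle R hRpos)
    filter_upwards [hmem] with x hx _
    exact hx.2
  have : IsFiniteMeasure ν := ⟨lt_of_le_of_lt hνuniv ENNReal.ofReal_lt_top⟩
  have e1 : ∫⁻ x in A, ENNReal.ofReal (g x / ρ x ^ 2) ∂μ
      = ∫⁻ x, ENNReal.ofReal (1 / ρ x ^ 2) ∂ν := by
    rw [hν, lintegral_withDensity_eq_lintegral_mul _ hg.ennreal_ofReal
      (by fun_prop)]
    refine lintegral_congr fun x => ?_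
    simp only [Pi.mul_apply]
    rw [← ENNReal.ofReal_mul (hg0 x)]
    congr 1
    ring
  -- the layer-cake kernel
  set k : X → ℝ → ℝ≥0∞ := fun x σ =>
    ({p : X × ℝ | ρ p.1 ≤ p.2}.indicator (fun p => ENNReal.ofReal (2 / p.2 ^ 3))) (x, σ) with hk
  have hkm : Measurable (Function.uncurry k) := by
    refine Measurable.indicator (by fun_prop) ?_
    exact measurableSet_le (by fun_prop) (by fun_prop)
  have e2 : ∀ x ∈ A, ENNReal.ofReal (1 / ρ x ^ 2)
      ≤ ENNReal.ofReal (1 / R ^ 2) + ∫⁻ σ in Ioc (Real.sqrt R) R, k x σ := by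
    intro x hx
    have hx0 : 0 < ρ x := by linarith [hx.1]
    have hcont : ContinuousOn (fun σ : ℝ => 2 / σ ^ 3) (Icc (ρ x) R) := by
      refine ContinuousOn.div (by fun_prop) (by fun_prop) ?_
      intro σ hσ
      have : 0 < σ := lt_of_lt_of_le hx0 hσ.1
      positivity
    have hint : IntervalIntegrable (fun σ : ℝ => 2 / σ ^ 3) volume (ρ x) R :=
      ContinuousOn.intervalIntegrable_of_Icc hx.2 hcont
    have hftc : ∫ σ in (ρ x)..R, 2 / σ ^ 3 = -(1 / R ^ 2) - -(1 / ρ x ^ 2) := by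
      refine intervalIntegral.integral_eq_sub_of_hasDerivAt
        (f := fun σ : ℝ => -(1 / σ ^ 2)) ?_ hint
      intro σ hσ
      rw [uIcc_of_le hx.2] at hσ
      have h0 : 0 < σ := lt_of_lt_of_le hx0 hσ.1
      have h := (((hasDerivAt_pow 2 σ).fun_inv (by positivity)).fun_neg)
      simp only [one_div]
      convert h using 1
      field_simp
      norm_num
    have h3 : ENNReal.ofReal (∫ σ in (ρ x)..R, 2 / σ ^ 3)
        = ∫⁻ σ in Ioc (ρ x) R, ENNReal.ofReal (2 / σ ^ 3) := by
      rw [intervalIntegral.integral_of_le hx.2]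
      refine ofReal_integral_eq_lintegral_ofReal hint.1 ?_
      filter_upwards [ae_restrict_mem measurableSet_Ioc] with σ hσ
      have : 0 < σ := lt_trans hx0 hσ.1
      simp only [Pi.zero_apply]
      positivity
    have h4 : ∫⁻ σ in Ioc (ρ x) R, ENNReal.ofReal (2 / σ ^ 3)
        ≤ ∫⁻ σ in Ioc (Real.sqrt R) R, k x σ := by
      calc _ = ∫⁻ σ in Ioc (ρ x) R, k x σ := by
            refine setLIntegral_congr_fun measurableSet_Ioc ?_
            intro σ hσ
            simp [hk, indicator, hσ.1.le]
        _ ≤ _ := lintegral_mono_set (Ioc_subset_Ioc_left hx.1)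
    calc ENNReal.ofReal (1 / ρ x ^ 2)
        = ENNReal.ofReal (1 / R ^ 2 + ∫ σ in (ρ x)..R, 2 / σ ^ 3) := by
          rw [hftc]; congr 1; ring
      _ ≤ _ := ENNReal.ofReal_add_le
      _ ≤ _ := by rw [h3]; gcongr
  have hVcont : ContinuousOn (fun σ : ℝ => V σ / σ ^ 3) (Icc (Real.sqrt R) R) := by
    refine ContinuousOn.div (hVc.mono ?_) (by fun_prop) ?_
    · intro σ hσ
      exact lt_of_lt_of_le (by linarith) hσ.1
    · intro σ hσ
      have : 0 < σ := lt_of_lt_of_le (by linarith) hσ.1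
      positivity
  have hVint : IntervalIntegrable (fun σ : ℝ => V σ / σ ^ 3) volume (Real.sqrt R) R :=
    ContinuousOn.intervalIntegrable_of_Icc hsR hVcont
  have hnn : 0 ≤ ∫ σ in Real.sqrt R..R, V σ / σ ^ 3 := by
    refine intervalIntegral.integral_nonneg hsR ?_
    intro σ hσ
    have h0 : 0 < σ := lt_of_lt_of_le (by linarith) hσ.1
    have := hV0 σ h0
    positivity
  have e3 : ∫⁻ σ in Ioc (Real.sqrt R) R, ENNReal.ofReal (2 * (V σ / σ ^ 3))
      = ENNReal.ofReal (2 * ∫ σ in Real.sqrt R..R, V σ / σ ^ 3) := by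
    rw [← intervalIntegral.integral_const_mul, intervalIntegral.integral_of_le hsR]
    refine (ofReal_integral_eq_lintegral_ofReal (hVint.const_mul 2).1 ?_).symm
    filter_upwards [ae_restrict_mem measurableSet_Ioc] with σ hσ
    have h0 : 0 < σ := lt_trans (by linarith) hσ.1
    have := hV0 σ h0
    simp only [Pi.zero_apply]
    positivity
  have hVR := hV0 R hRpos
  calc ∫⁻ x in A, ENNReal.ofReal (g x / ρ x ^ 2) ∂μ
      = ∫⁻ x, ENNReal.ofReal (1 / ρ x ^ 2) ∂ν := e1
    _ ≤ ∫⁻ x, (ENNReal.ofReal (1 / R ^ 2) + ∫⁻ σ in Ioc (Real.sqrt R) R, k x σ) ∂ν := by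
        refine lintegral_mono_ae ?_
        filter_upwards [hmem] with x hx using e2 x hx
    _ = ENNReal.ofReal (1 / R ^ 2) * ν univ
          + ∫⁻ σ in Ioc (Real.sqrt R) R, ∫⁻ x, k x σ ∂ν := by
        rw [lintegral_add_left measurable_const, lintegral_const,
          lintegral_lintegral_swap hkm.aemeasurable]
    _ ≤ ENNReal.ofReal (1 / R ^ 2) * ENNReal.ofReal (V R)
          + ∫⁻ σ in Ioc (Real.sqrt R) R, ENNReal.ofReal (2 * (V σ / σ ^ 3)) := by
        refine add_le_add (by gcongr) ?_
        refine setLIntegral_mono' measurableSet_Ioc ?_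
        intro σ hσ
        have h0 : 0 < σ := lt_trans (by linarith) hσ.1
        have hks : (fun x => k x σ)
            = {x | ρ x ≤ σ}.indicator (fun _ => ENNReal.ofReal (2 / σ ^ 3)) := by
          funext x
          simp [hk, indicator]
        rw [hks, lintegral_indicator_const (measurableSet_le hρ measurable_const)]
        calc _ ≤ ENNReal.ofReal (2 / σ ^ 3) * ENNReal.ofReal (V σ) := by
              gcongr
              exact hνle σ h0
          _ = _ := by
              rw [← ENNReal.ofReal_mul (by positivity)]
              congr 1
              ring
    _ = ENNReal.ofReal (1 / R ^ 2 * V R + 2 * ∫ σ in Real.sqrt R..R, V σ / σ ^ 3) := by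
        rw [e3, ← ENNReal.ofReal_mul (by positivity),
          ← ENNReal.ofReal_add (by positivity) (by positivity)]
    _ ≤ _ := by
        refine ENNReal.ofReal_le_ofReal ?_
        have h5 : 0 ≤ V R / R ^ 2 := by positivity
        have h6 : 1 / R ^ 2 * V R = V R / R ^ 2 := by ring
        rw [h6]
        linarith
end
end

section
/- Let Ω ⊆ ℝⁿ be open, let a ∈ C¹([0,∞)) satisfy a(t) > 0 and (t·a(t))′ > 0 for all t ≥ 0, and assume a is of mean curvature type: there exist constants C₁, C₂ > 0 with t²·λ₁(t) ≤ C₁·λ₂(t) ≤ C₂/t for all t > 0. Let f : ℝ → ℝ be continuous and let u ∈ C¹(Ω) be a weak solution of Δ_a u + f(u) = 0 in Ω with sup_Ω |∇u| < ∞ and |Ω ∩ B_R| = o(R² log R) as R → ∞. Then u has moderate energy growth in Ω. -/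
open MeasureTheory Set Metric Filter
open scoped RealInnerProductSpace Topology ENNReal

noncomputable section

variable {n : ℕ}

/-- The quasilinear operator matrix `A(p)` applied to a vector `v`:
`A(p)v = a(|p|) v + (a'(|p|)/|p|) ⟨p,v⟩ p` (with the second term vanishing at `p = 0`). -/
def Aop (a : ℝ → ℝ) (p v : EuclideanSpace ℝ (Fin n)) : EuclideanSpace ℝ (Fin n) :=
  a ‖p‖ • v + ((deriv a ‖p‖ / ‖p‖) * ⟪p, v⟫) • p

/-- `λ₁(t) = a(t) + t·a'(t) = (t a(t))'`. -/
def lam1 (a : ℝ → ℝ) (t : ℝ) : ℝ := a t + t * deriv a t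

/-- `λ₂(t) = a(t)`. -/
def lam2 (a : ℝ → ℝ) (t : ℝ) : ℝ := a t

/-- `λmax(t) = max{λ₁(t), λ₂(t)}`. -/
def lamMax (a : ℝ → ℝ) (t : ℝ) : ℝ := max (lam1 a t) (lam2 a t)

/-- A Lipschitz test function with compact support contained in `Ω`. -/
def IsTestOn (Ω : Set (EuclideanSpace ℝ (Fin n))) (φ : EuclideanSpace ℝ (Fin n) → ℝ) : Prop :=
  (∃ K, LipschitzWith K φ) ∧ HasCompactSupport φ ∧ tsupport φ ⊆ Ω

/-- `u` is a weak solution of `div(a(|∇u|)∇u) + f(u) = 0` in `Ω`. -/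
def IsWeakSolution (a f : ℝ → ℝ) (Ω : Set (EuclideanSpace ℝ (Fin n)))
    (u : EuclideanSpace ℝ (Fin n) → ℝ) : Prop :=
  ∀ φ : EuclideanSpace ℝ (Fin n) → ℝ, IsTestOn Ω φ →
    ∫ x in Ω, a ‖gradient u x‖ * ⟪gradient u x, gradient φ x⟫
      = ∫ x in Ω, f (u x) * φ x

/-- The stability inequality for a solution `u`. -/
def IsStable (a f : ℝ → ℝ) (Ω : Set (EuclideanSpace ℝ (Fin n)))
    (u : EuclideanSpace ℝ (Fin n) → ℝ) : Prop :=
  ∀ φ : EuclideanSpace ℝ (Fin n) → ℝ, IsTestOn Ω φ →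
    ∫ x in Ω, deriv f (u x) * φ x ^ 2
      ≤ ∫ x in Ω, ⟪Aop a (gradient u x) (gradient φ x), gradient φ x⟫

/-- `u` has moderate energy growth in `Ω₀`. -/
def ModerateEnergyGrowth (a : ℝ → ℝ) (u : EuclideanSpace ℝ (Fin n) → ℝ)
    (Ω₀ : Set (EuclideanSpace ℝ (Fin n))) : Prop :=
  ∃ φ : ℕ → EuclideanSpace ℝ (Fin n) → ℝ,
    (∀ j, ∃ K, LipschitzWith K (φ j)) ∧
    (∀ j, HasCompactSupport (φ j)) ∧
    (∀ j x, 0 ≤ φ j x) ∧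
    (∀ K : Set (EuclideanSpace ℝ (Fin n)), IsCompact K → K ⊆ closure Ω₀ →
      TendstoUniformlyOn (fun j => φ j) (fun _ => (1 : ℝ)) atTop K) ∧
    Tendsto (fun j => ∫ x in Ω₀, ‖gradient u x‖ ^ 2 *
        ⟪Aop a (gradient u x) (gradient (φ j) x), gradient (φ j) x⟫)
      atTop (nhds 0)

/-- A `C^k` domain: nonempty, open, connected, with boundary locally given by a regular
`C^k` defining function. -/
def IsCkDomain (k : ℕ∞) (Ω : Set (EuclideanSpace ℝ (Fin n))) : Prop :=
  Ω.Nonempty ∧ IsOpen Ω ∧ IsConnected Ω ∧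
    ∀ p ∈ frontier Ω, ∃ V : Set (EuclideanSpace ℝ (Fin n)),
      ∃ g : EuclideanSpace ℝ (Fin n) → ℝ,
        IsOpen V ∧ p ∈ V ∧ ContDiffOn ℝ k g V ∧ (∀ x ∈ V, gradient g x ≠ 0) ∧
        Ω ∩ V = {x ∈ V | g x < 0}

/-- A `C^k` domain together with its interior unit normal field `η`. -/
def IsCkDomainWithNormal (k : ℕ∞) (Ω : Set (EuclideanSpace ℝ (Fin n)))
    (η : EuclideanSpace ℝ (Fin n) → EuclideanSpace ℝ (Fin n)) : Prop :=
  Ω.Nonempty ∧ IsOpen Ω ∧ IsConnected Ω ∧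
    ∀ p ∈ frontier Ω, ∃ V : Set (EuclideanSpace ℝ (Fin n)),
      ∃ g : EuclideanSpace ℝ (Fin n) → ℝ,
        IsOpen V ∧ p ∈ V ∧ ContDiffOn ℝ k g V ∧ (∀ x ∈ V, gradient g x ≠ 0) ∧
        Ω ∩ V = {x ∈ V | g x < 0} ∧
        η p = -(‖gradient g p‖⁻¹ • gradient g p)

/-- `a ∈ C^{1,1}_loc([0,∞))`: `C¹` on `[0,∞)` with locally Lipschitz derivative. -/
def C11Loc (a : ℝ → ℝ) : Prop :=
  ContDiffOn ℝ 1 a (Ici 0) ∧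
    ∀ t ∈ Ici (0 : ℝ), ∃ V ∈ 𝓝[Ici (0 : ℝ)] t, ∃ K, LipschitzOnWith K (deriv a) V

/-- logarithmic cutoff -/
def cutoffLog (L : ℝ) (x : EuclideanSpace ℝ (Fin n)) : ℝ :=
  max 0 (min 1 (2 - Real.log (max ‖x‖ 1) / L))

lemma log_sub_le_aux {r s ρ : ℝ} (hρ : 0 < ρ) (hr : ρ ≤ r) (hs : ρ ≤ s) :
    Real.log r - Real.log s ≤ |r - s| / ρ := by
  have hr0 : 0 < r := by linarith
  have hs0 : 0 < s := by linarith
  rw [← Real.log_div hr0.ne' hs0.ne']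
  have h1 := Real.log_le_sub_one_of_pos (div_pos hr0 hs0)
  have h2 : r / s - 1 = (r - s) / s := by field_simp
  rw [h2] at h1
  calc _ ≤ (r - s) / s := h1
    _ ≤ |r - s| / s := by gcongr; exact le_abs_self _
    _ ≤ |r - s| / ρ := by gcongr

lemma abs_log_sub_le_aux {r s ρ : ℝ} (hρ : 0 < ρ) (hr : ρ ≤ r) (hs : ρ ≤ s) :
    |Real.log r - Real.log s| ≤ |r - s| / ρ := by
  rw [abs_le]
  constructor
  · have := log_sub_le_aux hρ hs hr
    rw [abs_sub_comm] at this
    linarith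
  · exact log_sub_le_aux hρ hr hs

lemma cutoffLog_lip {L ρ : ℝ} (hL : 0 < L) (hρ : 0 < ρ) (x y : EuclideanSpace ℝ (Fin n))
    (hx : ρ ≤ max ‖x‖ 1) (hy : ρ ≤ max ‖y‖ 1) :
    |cutoffLog L x - cutoffLog L y| ≤ 1 / (L * ρ) * ‖x - y‖ := by
  unfold cutoffLog
  have h1 := abs_log_sub_le_aux hρ hx hy
  have h2 : |max ‖x‖ 1 - max ‖y‖ 1| ≤ ‖x - y‖ :=
    (abs_max_sub_max_le_abs _ _ _).trans (abs_norm_sub_norm_le x y)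
  calc _ ≤ |min 1 (2 - Real.log (max ‖x‖ 1) / L) - min 1 (2 - Real.log (max ‖y‖ 1) / L)| := by
        rw [max_comm 0, max_comm 0]; exact abs_max_sub_max_le_abs _ _ _
    _ ≤ |(2 - Real.log (max ‖x‖ 1) / L) - (2 - Real.log (max ‖y‖ 1) / L)| := by
        have := abs_min_sub_min_le_max (1:ℝ) (2 - Real.log (max ‖x‖ 1) / L) 1
          (2 - Real.log (max ‖y‖ 1) / L)
        simpa using this
    _ = |Real.log (max ‖x‖ 1) - Real.log (max ‖y‖ 1)| / L := by
        rw [abs_sub_comm, ← abs_of_pos hL, ← abs_div, abs_of_pos hL]; congr 1; ring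
    _ ≤ (‖x - y‖ / ρ) / L := by
        gcongr
        exact h1.trans (by gcongr)
    _ = _ := by field_simp

lemma cutoffLog_eq_one {L : ℝ} (hL : 0 < L) (x : EuclideanSpace ℝ (Fin n))
    (hx : ‖x‖ ≤ Real.exp L) : cutoffLog L x = 1 := by
  unfold cutoffLog
  have h1 : max ‖x‖ 1 ≤ Real.exp L := max_le hx (Real.one_le_exp hL.le)
  have h2 : Real.log (max ‖x‖ 1) ≤ L := by
    rw [Real.log_le_iff_le_exp (by positivity)]; exact h1
  have h3 : Real.log (max ‖x‖ 1) / L ≤ 1 := by rw [div_le_one hL]; exact h2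
  rw [min_eq_left (by linarith)]; simp

lemma cutoffLog_eq_zero {L : ℝ} (hL : 0 < L) (x : EuclideanSpace ℝ (Fin n))
    (hx : Real.exp (2 * L) ≤ ‖x‖) : cutoffLog L x = 0 := by
  unfold cutoffLog
  have h1 : Real.exp (2 * L) ≤ max ‖x‖ 1 := hx.trans (le_max_left _ _)
  have h2 : 2 * L ≤ Real.log (max ‖x‖ 1) := by
    rw [Real.le_log_iff_exp_le (by positivity)]; exact h1
  have h3 : 2 ≤ Real.log (max ‖x‖ 1) / L := by rw [le_div_iff₀ hL]; exact h2
  rw [max_eq_left]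
  exact (min_le_right _ _).trans (by linarith)

lemma norm_gradient_aux (φ : EuclideanSpace ℝ (Fin n) → ℝ) (x : EuclideanSpace ℝ (Fin n)) :
    ‖gradient φ x‖ = ‖fderiv ℝ φ x‖ := by
  unfold gradient
  simp

lemma grad_cutoff_le {L ρ : ℝ} (hL : 0 < L) (hρ : 0 < ρ) (x : EuclideanSpace ℝ (Fin n))
    (hx : ρ < ‖x‖) : ‖gradient (cutoffLog L) x‖ ≤ 1 / (L * ρ) := by
  rw [norm_gradient_aux]
  have hnn : 0 ≤ 1 / (L * ρ) := by positivity
  have hs : {y : EuclideanSpace ℝ (Fin n) | ρ < ‖y‖} ∈ 𝓝 x :=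
    (isOpen_lt continuous_const continuous_norm).mem_nhds hx
  have := norm_fderiv_le_of_lipschitzOn ℝ (f := cutoffLog L) (C := ⟨1 / (L * ρ), hnn⟩) hs
    (LipschitzOnWith.of_dist_le_mul (fun y hy z hz => by
      rw [Real.dist_eq, dist_eq_norm]
      exact cutoffLog_lip hL hρ y z (hy.le.trans (le_max_left _ _)) (hz.le.trans (le_max_left _ _))))
  exact this

lemma grad_cutoff_inner {L : ℝ} (hL : 0 < L) (x : EuclideanSpace ℝ (Fin n))
    (hx : ‖x‖ < Real.exp L) : gradient (cutoffLog L) x = 0 := by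
  have hs : {y : EuclideanSpace ℝ (Fin n) | ‖y‖ < Real.exp L} ∈ 𝓝 x :=
    (isOpen_lt continuous_norm continuous_const).mem_nhds hx
  have h : cutoffLog L =ᶠ[𝓝 x] fun _ => (1:ℝ) := by
    filter_upwards [hs] with y hy using cutoffLog_eq_one hL y (le_of_lt hy)
  rw [← norm_eq_zero, norm_gradient_aux, h.fderiv_eq]; simp

lemma grad_cutoff_outer {L : ℝ} (hL : 0 < L) (x : EuclideanSpace ℝ (Fin n))
    (hx : Real.exp (2 * L) < ‖x‖) : gradient (cutoffLog L) x = 0 := by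
  have hs : {y : EuclideanSpace ℝ (Fin n) | Real.exp (2 * L) < ‖y‖} ∈ 𝓝 x :=
    (isOpen_lt continuous_const continuous_norm).mem_nhds hx
  have h : cutoffLog L =ᶠ[𝓝 x] fun _ => (0:ℝ) := by
    filter_upwards [hs] with y hy using cutoffLog_eq_zero hL y (le_of_lt hy)
  rw [← norm_eq_zero, norm_gradient_aux, h.fderiv_eq]; simp

lemma exp_mul_log_two (m : ℕ) : Real.exp (m * Real.log 2) = 2 ^ m := by
  rw [Real.exp_nat_mul, Real.exp_log (by norm_num)]

lemma exp_two_mul_log_two (m : ℕ) : Real.exp (2 * (m * Real.log 2)) = 2 ^ (2 * m) := by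
  rw [← exp_mul_log_two]; push_cast; ring_nf

/-- weight bound -/
lemma weight_bound (a : ℝ → ℝ) (hapos : ∀ t ≥ (0 : ℝ), 0 < a t)
    (hlam : ∀ t ≥ (0 : ℝ), 0 < lam1 a t) (C₁ M A : ℝ) (hC₁ : 0 < C₁)
    (hmc : ∀ t > (0 : ℝ), t ^ 2 * lam1 a t ≤ C₁ * lam2 a t)
    (hA : ∀ t ∈ Icc 0 M, a t ≤ A) (p v : EuclideanSpace ℝ (Fin n)) (hp : ‖p‖ ≤ M) :
    0 ≤ ‖p‖ ^ 2 * ⟪Aop a p v, v⟫ ∧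
      ‖p‖ ^ 2 * ⟪Aop a p v, v⟫ ≤ (C₁ * A + M ^ 2 * A) * ‖v‖ ^ 2 := by
  have hApos : 0 < A := (hapos _ (norm_nonneg p)).trans_le (hA _ ⟨norm_nonneg p, hp⟩)
  rcases eq_or_ne p 0 with rfl | hp0
  · simp; positivity
  have ht : 0 < ‖p‖ := norm_pos_iff.mpr hp0
  have haA := hA _ ⟨ht.le, hp⟩
  have e : ⟪Aop a p v, v⟫ = a ‖p‖ * ‖v‖ ^ 2 + deriv a ‖p‖ / ‖p‖ * ⟪p, v⟫ ^ 2 := by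
    unfold Aop
    rw [inner_add_left, real_inner_smul_left, real_inner_smul_left, real_inner_self_eq_norm_sq]
    ring
  have hcs : ⟪p, v⟫ ^ 2 ≤ ‖p‖ ^ 2 * ‖v‖ ^ 2 := by
    rw [← mul_pow]
    exact sq_le_sq' (neg_le_of_abs_le (abs_real_inner_le_norm p v)) (real_inner_le_norm p v)
  have h1 := hmc _ ht
  have hl := hlam _ ht.le
  have ha0 := hapos _ ht.le
  unfold lam1 lam2 at *
  rw [e]
  have hq0 : 0 ≤ ⟪p, v⟫ ^ 2 := sq_nonneg _
  generalize ⟪p, v⟫ ^ 2 = q at *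
  have hq : 0 ≤ q := hq0
  set t := ‖p‖
  set V := ‖v‖ ^ 2
  set d := deriv a t
  have hV : 0 ≤ V := by positivity
  have e2 : d / t * (t ^ 2 * V) = t * d * V := by field_simp
  have hC : 0 ≤ C₁ * A * V := by positivity
  have hMM : 0 ≤ M ^ 2 * A * V := by positivity
  rcases le_or_gt 0 d with hd | hd
  · have h3 : d / t * q ≤ t * d * V := by rw [← e2]; gcongr
    constructor
    · positivity
    · calc _ ≤ t ^ 2 * ((a t + t * d) * V) := by gcongr; linarith
        _ = (t ^ 2 * (a t + t * d)) * V := by ring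
        _ ≤ (C₁ * A) * V :=
          mul_le_mul_of_nonneg_right (h1.trans (by gcongr)) hV
        _ ≤ _ := by linarith
  · have hdt : d / t ≤ 0 := (div_neg_of_neg_of_pos hd ht).le
    have h3 : t * d * V ≤ d / t * q := by
      rw [← e2]; exact mul_le_mul_of_nonpos_left hcs hdt
    have h4 : d / t * q ≤ 0 := mul_nonpos_of_nonpos_of_nonneg hdt hq
    constructor
    · have : 0 ≤ (a t + t * d) * V := by positivity
      apply mul_nonneg (by positivity); linarith
    · calc _ ≤ t ^ 2 * (a t * V) := by gcongr; linarith
        _ = (t ^ 2 * a t) * V := by ring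
        _ ≤ (M ^ 2 * A) * V := by gcongr
        _ ≤ _ := by linarith

lemma sum_bound_aux (D ε : ℝ) (hD : 0 ≤ D) (hε : 0 ≤ ε) (V : ℝ → ℝ) (m : ℕ) (hm : 1 ≤ m)
    (hV : ∀ i ≥ m, V (2 ^ (i + 1)) ≤ ε * ((2 ^ (i + 1)) ^ 2 * Real.log (2 ^ (i + 1)))) :
    ∑ i ∈ Finset.Icc m (2 * m), D * (2 / (m * Real.log 2 * 2 ^ i)) ^ 2 * V (2 ^ (i + 1))
      ≤ 96 * D / Real.log 2 * ε := by
  have hl : 0 < Real.log 2 := Real.log_pos (by norm_num)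
  have hm' : (1:ℝ) ≤ m := by exact_mod_cast hm
  have hm0 : (0:ℝ) < m := by linarith
  have key : ∀ i ∈ Finset.Icc m (2 * m),
      D * (2 / (m * Real.log 2 * 2 ^ i)) ^ 2 * V (2 ^ (i + 1)) ≤ 48 * D * ε / (m * Real.log 2) := by
    intro i hi
    rw [Finset.mem_Icc] at hi
    have hi2 : (i:ℝ) + 1 ≤ 3 * m := by
      have : i + 1 ≤ 3 * m := by omega
      exact_mod_cast this
    calc _ ≤ D * (2 / (m * Real.log 2 * 2 ^ i)) ^ 2 *
          (ε * ((2 ^ (i + 1)) ^ 2 * Real.log (2 ^ (i + 1)))) := by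
          gcongr; exact hV i hi.1
      _ = 16 * D * ε / (m ^ 2 * Real.log 2) * (i + 1) := by
          rw [Real.log_pow]; push_cast; field_simp; ring
      _ ≤ 16 * D * ε / (m ^ 2 * Real.log 2) * (3 * m) := by gcongr
      _ = _ := by field_simp; ring
  refine (Finset.sum_le_card_nsmul _ _ _ key).trans ?_
  rw [Nat.card_Icc, nsmul_eq_mul]
  have hc : ((2 * m + 1 - m : ℕ) : ℝ) ≤ 2 * m := by
    have : 2 * m + 1 - m ≤ 2 * m := by omega
    exact_mod_cast this
  calc _ ≤ (2 * m : ℝ) * (48 * D * ε / (m * Real.log 2)) := by gcongr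
    _ = _ := by field_simp; ring

/-- Proposition 2.5 of the paper, in `ℝⁿ`: for operators of mean curvature type, a bounded
gradient together with `|Ω ∩ B_R| = o(R² log R)` implies moderate energy growth. -/
theorem moderate_energy_growth_of_bounded_gradient
    (n : ℕ) (Ω : Set (EuclideanSpace ℝ (Fin n))) (hΩ : IsOpen Ω)
    (a : ℝ → ℝ) (ha : ContDiffOn ℝ 1 a (Ici 0))
    (hapos : ∀ t ≥ (0 : ℝ), 0 < a t) (hlam : ∀ t ≥ (0 : ℝ), 0 < lam1 a t)
    (C₁ C₂ : ℝ) (hC₁ : 0 < C₁) (hC₂ : 0 < C₂)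
    (hmc : ∀ t > (0 : ℝ), t ^ 2 * lam1 a t ≤ C₁ * lam2 a t ∧ C₁ * lam2 a t ≤ C₂ / t)
    (f : ℝ → ℝ) (hf : Continuous f)
    (u : EuclideanSpace ℝ (Fin n) → ℝ) (hu : ContDiffOn ℝ 1 u Ω)
    (hsol : IsWeakSolution a f Ω u)
    (hgrad : ∃ M, ∀ x ∈ Ω, ‖gradient u x‖ ≤ M)
    (hvol : Tendsto
      (fun R => (volume (Ω ∩ Metric.ball (0 : EuclideanSpace ℝ (Fin n)) R)).toReal /
        (R ^ 2 * Real.log R)) atTop (nhds 0)) :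
    ModerateEnergyGrowth a u Ω := by
  obtain ⟨M₀, hM₀⟩ := hgrad
  set M := max M₀ 0
  have hM : ∀ x ∈ Ω, ‖gradient u x‖ ≤ M := fun x hx => (hM₀ x hx).trans (le_max_left _ _)
  obtain ⟨A, hA⟩ : ∃ A, ∀ t ∈ Icc 0 M, a t ≤ A := by
    have hc : ContinuousOn a (Icc 0 M) := ha.continuousOn.mono Icc_subset_Ici_self
    obtain ⟨A, hA⟩ := (isCompact_Icc.image_of_continuousOn hc).bddAbove
    exact ⟨A, fun t ht => hA ⟨t, ht, rfl⟩⟩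
  have hApos : 0 < A := (hapos 0 le_rfl).trans_le (hA 0 ⟨le_rfl, le_max_right _ _⟩)
  set D := C₁ * A + M ^ 2 * A with hDdef
  have hD : 0 < D := by positivity
  have hw : ∀ x ∈ Ω, ∀ v, 0 ≤ ‖gradient u x‖ ^ 2 * ⟪Aop a (gradient u x) v, v⟫ ∧
      ‖gradient u x‖ ^ 2 * ⟪Aop a (gradient u x) v, v⟫ ≤ D * ‖v‖ ^ 2 := fun x hx v =>
    weight_bound a hapos hlam C₁ M A hC₁ (fun t ht => (hmc t ht).1) hA _ v (hM x hx)
  have hl : 0 < Real.log 2 := Real.log_pos (by norm_num)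
  have hL : ∀ j : ℕ, 0 < ((j + 1 : ℕ) : ℝ) * Real.log 2 := fun j => by positivity
  refine ⟨fun j => cutoffLog (((j + 1 : ℕ) : ℝ) * Real.log 2), ?_, ?_, ?_, ?_, ?_⟩
  · intro j
    have hnn : 0 ≤ 1 / (((j + 1 : ℕ) : ℝ) * Real.log 2 * 1) := by
      have := hL j; positivity
    refine ⟨⟨_, hnn⟩, LipschitzWith.of_dist_le_mul fun x y => ?_⟩
    rw [Real.dist_eq, dist_eq_norm]
    exact cutoffLog_lip (hL j) one_pos x y (le_max_right _ _) (le_max_right _ _)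
  · intro j
    refine HasCompactSupport.of_support_subset_isCompact
      (isCompact_closedBall 0 (Real.exp (2 * (((j + 1 : ℕ) : ℝ) * Real.log 2)))) ?_
    intro x hx
    rw [mem_closedBall_zero_iff]
    by_contra! h
    exact hx (cutoffLog_eq_zero (hL j) x h.le)
  · intro j x
    exact le_max_left _ _
  · intro K hK _
    obtain ⟨r, hr⟩ := hK.isBounded.subset_closedBall (0 : EuclideanSpace ℝ (Fin n))
    rw [Metric.tendstoUniformlyOn_iff]
    intro ε hε
    have ht : ∀ᶠ j : ℕ in atTop, r ≤ (2:ℝ) ^ (j + 1) :=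
      ((tendsto_pow_atTop_atTop_of_one_lt (one_lt_two (α := ℝ))).comp
        (tendsto_add_atTop_nat 1)).eventually_ge_atTop r
    filter_upwards [ht] with j hj x hx
    have hx' : ‖x‖ ≤ r := by simpa using hr hx
    rw [cutoffLog_eq_one (hL j) x (by rw [exp_mul_log_two]; exact hx'.trans hj)]
    simpa using hε
  · set V : ℝ → ℝ := fun R => (volume (Ω ∩ Metric.ball (0 : EuclideanSpace ℝ (Fin n)) R)).toReal
      with hVdef
    have hnonneg : ∀ j : ℕ, 0 ≤ ∫ x in Ω, ‖gradient u x‖ ^ 2 *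
        ⟪Aop a (gradient u x) (gradient (cutoffLog (((j + 1 : ℕ) : ℝ) * Real.log 2)) x),
          gradient (cutoffLog (((j + 1 : ℕ) : ℝ) * Real.log 2)) x⟫ := fun j =>
      setIntegral_nonneg hΩ.measurableSet fun x hx => (hw x hx _).1
    have hub : ∀ j : ℕ, ∫ x in Ω, ‖gradient u x‖ ^ 2 *
        ⟪Aop a (gradient u x) (gradient (cutoffLog (((j + 1 : ℕ) : ℝ) * Real.log 2)) x),
          gradient (cutoffLog (((j + 1 : ℕ) : ℝ) * Real.log 2)) x⟫ ≤
        ∑ i ∈ Finset.Icc (j + 1) (2 * (j + 1)),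
          D * (2 / (((j + 1 : ℕ) : ℝ) * Real.log 2 * 2 ^ i)) ^ 2 * V (2 ^ (i + 1)) := by
      intro j
      have hLj := hL j
      set L := ((j + 1 : ℕ) : ℝ) * Real.log 2 with hLdef
      have hint : ∀ i ∈ Finset.Icc (j + 1) (2 * (j + 1)), Integrable
          ((ball (0 : EuclideanSpace ℝ (Fin n)) (2 ^ (i + 1))).indicator
            (fun _ => D * (2 / (L * 2 ^ i)) ^ 2)) (volume.restrict Ω) := by
        intro i _
        rw [integrable_indicator_iff measurableSet_ball]
        refine integrableOn_const ?_
        exact ((Measure.restrict_apply_le _ _).trans_lt measure_ball_lt_top).ne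
      have e : ∑ i ∈ Finset.Icc (j + 1) (2 * (j + 1)),
          D * (2 / (L * 2 ^ i)) ^ 2 * V (2 ^ (i + 1)) =
          ∫ x in Ω, ∑ i ∈ Finset.Icc (j + 1) (2 * (j + 1)),
            (ball (0 : EuclideanSpace ℝ (Fin n)) (2 ^ (i + 1))).indicator
            (fun _ => D * (2 / (L * 2 ^ i)) ^ 2) x := by
        rw [integral_finsetSum _ hint]
        refine Finset.sum_congr rfl fun i _ => ?_
        rw [integral_indicator_const _ measurableSet_ball, smul_eq_mul, mul_comm,
          measureReal_def, Measure.restrict_apply measurableSet_ball, inter_comm]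
      rw [e]
      refine integral_mono_of_nonneg ?_ (integrable_finsetSum _ hint) ?_
      · exact (ae_restrict_iff' hΩ.measurableSet).2 (Eventually.of_forall fun x hx => (hw x hx _).1)
      · refine (ae_restrict_iff' hΩ.measurableSet).2 (Eventually.of_forall fun x hx => ?_)
        refine (hw x hx _).2.trans ?_
        have hterm : ∀ i ∈ Finset.Icc (j + 1) (2 * (j + 1)),
            0 ≤ (ball (0 : EuclideanSpace ℝ (Fin n)) (2 ^ (i + 1))).indicator
            (fun _ => D * (2 / (L * 2 ^ i)) ^ 2) x := fun i _ =>
          indicator_nonneg (fun _ _ => by positivity) x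
        by_cases h1 : ‖x‖ < Real.exp L
        · rw [grad_cutoff_inner hLj x h1]
          simpa using Finset.sum_nonneg hterm
        by_cases h2 : Real.exp (2 * L) < ‖x‖
        · rw [grad_cutoff_outer hLj x h2]
          simpa using Finset.sum_nonneg hterm
        rw [hLdef, exp_mul_log_two] at h1
        rw [hLdef, exp_two_mul_log_two] at h2
        push Not at h1 h2
        obtain ⟨i, hi1, hi2⟩ := exists_nat_pow_near
          ((one_le_pow₀ (one_le_two (α := ℝ))).trans h1) (one_lt_two (α := ℝ))
        have hi3 : j + 1 < i + 1 := (pow_lt_pow_iff_right₀ (one_lt_two (α := ℝ))).1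
          (h1.trans_lt hi2)
        have hi4 : i ≤ 2 * (j + 1) := (pow_le_pow_iff_right₀ (one_lt_two (α := ℝ))).1
          (hi1.trans h2)
        have hmem : i ∈ Finset.Icc (j + 1) (2 * (j + 1)) := by
          rw [Finset.mem_Icc]; omega
        refine le_trans ?_ (Finset.single_le_sum hterm hmem)
        rw [indicator_of_mem (by simpa using hi2)]
        have hp : (0:ℝ) < 2 ^ i := by positivity
        have hg := grad_cutoff_le hLj (ρ := 2 ^ i / 2) (by positivity) x (by linarith)
        have e3 : 1 / (L * (2 ^ i / 2)) = 2 / (L * 2 ^ i) := by field_simp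
        rw [e3] at hg
        gcongr
    rw [Metric.tendsto_atTop]
    intro δ hδ
    set ε := δ * Real.log 2 / (192 * D) with hεdef
    have hε : 0 < ε := by positivity
    have hev : ∀ᶠ R in atTop, V R ≤ ε * (R ^ 2 * Real.log R) := by
      filter_upwards [hvol.eventually (gt_mem_nhds hε), eventually_gt_atTop 1] with R hR hR1
      have : 0 < R ^ 2 * Real.log R := mul_pos (by positivity) (Real.log_pos hR1)
      exact ((div_lt_iff₀ this).1 hR).le
    have hev2 := (tendsto_pow_atTop_atTop_of_one_lt (one_lt_two (α := ℝ))).eventually hev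
    obtain ⟨N, hN⟩ := eventually_atTop.1 hev2
    refine ⟨N, fun j hj => ?_⟩
    rw [Real.dist_eq, sub_zero, abs_of_nonneg (hnonneg j)]
    refine (hub j).trans_lt ?_
    refine (sum_bound_aux D ε hD.le hε.le V (j + 1) (by omega)
      (fun i hi => hN (i + 1) (by omega))).trans_lt ?_
    have : 96 * D / Real.log 2 * ε = δ / 2 := by rw [hεdef]; field_simp; norm_num
    rw [this]; linarith
end
end

section
/- Let Ω ⊆ ℝⁿ be a C¹ domain, f : ℝ → ℝ continuous, and a : [0,∞) → [0,∞) continuous with t ↦ t·a(t) bounded on (0,∞) and locally Lipschitz on [0,∞). Let u ∈ C²(Ω) ∩ C¹(cl Ω) be a weak solution of Δ_a u + f(u) = 0 in Ω. Assume that u is constant on ∂⋆Ω, that −C₀ ≤ f(u) ≤ 0 in Ω for some constant C₀ ≥ 0, and that inf_Ω u > −∞. Then there exists C > 0 such that ∫_{Ω ∩ {ρ ≤ R}} a(|∇u|)|∇u|² dx ≤ C·|Ω ∩ B_{4R}| for all sufficiently large R. -/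
open MeasureTheory Set Metric Filter
open scoped RealInnerProductSpace Topology ENNReal

noncomputable section

variable {n : ℕ}

/-- Product rule for gradients. -/
lemma hasGradientAt_mul_aux {f g : EuclideanSpace ℝ (Fin n) → ℝ}
    {f' g' x : EuclideanSpace ℝ (Fin n)}
    (hf : HasGradientAt f f' x) (hg : HasGradientAt g g' x) :
    HasGradientAt (fun y => f y * g y) (f x • g' + g x • f') x := by
  rw [hasGradientAt_iff_hasFDerivAt] at *
  have h : (InnerProductSpace.toDual ℝ (EuclideanSpace ℝ (Fin n))) (f x • g' + g x • f') =
      f x • (InnerProductSpace.toDual ℝ (EuclideanSpace ℝ (Fin n))) g' +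
        g x • (InnerProductSpace.toDual ℝ (EuclideanSpace ℝ (Fin n))) f' := by
    simp
  rw [h]
  exact hf.mul hg

/-- Chain rule for gradients. -/
lemma hasGradientAt_comp_aux {f : EuclideanSpace ℝ (Fin n) → ℝ} {T : ℝ → ℝ} {T' : ℝ}
    {f' x : EuclideanSpace ℝ (Fin n)}
    (hT : HasDerivAt T T' (f x)) (hf : HasGradientAt f f' x) :
    HasGradientAt (fun y => T (f y)) (T' • f') x := by
  rw [hasGradientAt_iff_hasFDerivAt] at *
  have h : (InnerProductSpace.toDual ℝ (EuclideanSpace ℝ (Fin n))) (T' • f') =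
      T' • (InnerProductSpace.toDual ℝ (EuclideanSpace ℝ (Fin n))) f' := by
    simp
  rw [h]
  exact hT.comp_hasFDerivAt x hf

lemma continuousOn_gradient_aux {f : EuclideanSpace ℝ (Fin n) → ℝ}
    {V : Set (EuclideanSpace ℝ (Fin n))} (hV : IsOpen V) (hf : ContDiffOn ℝ 1 f V) :
    ContinuousOn (gradient f) V := by
  have := hf.continuousOn_fderiv_of_isOpen hV le_rfl
  exact (LinearIsometryEquiv.continuous _).comp_continuousOn this

lemma gradient_eq_zero_of_notMem_tsupport {θ : EuclideanSpace ℝ (Fin n) → ℝ}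
    {x : EuclideanSpace ℝ (Fin n)} (hx : x ∉ tsupport θ) : gradient θ x = 0 := by
  have h : θ =ᶠ[𝓝 x] fun _ => (0:ℝ) := notMem_tsupport_iff_eventuallyEq.mp hx
  rw [h.gradient_eq]; simp

/-- Mean value inequality along a direction. -/
lemma mvt_aux {g : EuclideanSpace ℝ (Fin n) → ℝ} {B : Set (EuclideanSpace ℝ (Fin n))}
    {e : EuclideanSpace ℝ (Fin n)} {c : ℝ} (hB : Convex ℝ B)
    (hd : ∀ x ∈ B, DifferentiableAt ℝ g x)
    (hg : ∀ x ∈ B, c ≤ ⟪gradient g x, e⟫) {y : EuclideanSpace ℝ (Fin n)} {s : ℝ} (hs : 0 ≤ s)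
    (hy : y ∈ B) (hys : y + s • e ∈ B) : c * s ≤ g (y + s • e) - g y := by
  have hmem : ∀ t ∈ Icc 0 s, y + t • e ∈ B := by
    intro t ht
    rcases hs.eq_or_lt with h0 | h0
    · have : t = 0 := le_antisymm (h0 ▸ ht.2) ht.1
      simpa [this] using hy
    · have := hB.add_smul_mem hy hys (t := t / s) ⟨by have := ht.1; positivity, by
        rw [div_le_one h0]; exact ht.2⟩
      rwa [smul_smul, div_mul_cancel₀ _ h0.ne'] at this
  have hder : ∀ t ∈ Icc 0 s, HasDerivAt (fun t : ℝ => g (y + t • e))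
      ⟪gradient g (y + t • e), e⟫ t := by
    intro t ht
    have h1 := (hd _ (hmem t ht)).hasFDerivAt
    have h2 : HasDerivAt (fun t : ℝ => y + t • e) e t := by
      simpa using ((hasDerivAt_id t).smul_const e).const_add y
    rw [inner_gradient_left]
    exact h1.comp_hasDerivAt t h2
  have := (convex_Icc 0 s).mul_sub_le_image_sub_of_le_deriv (f := fun t : ℝ => g (y + t • e))
    (C := c) (fun t ht => (hder t ht).continuousAt.continuousWithinAt)
    (fun t ht => (hder t (interior_subset ht)).differentiableAt.differentiableWithinAt)
    (fun t ht => by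
      rw [(hder t (interior_subset ht)).deriv]; exact hg _ (hmem t (interior_subset ht)))
    0 ⟨le_rfl, hs⟩ s ⟨hs, le_rfl⟩ hs
  simpa using this

/-- The measure of the layer `{-2ε ≤ g < 0}` near a regular point is `O(ε)`. -/
lemma layer_measure {g : EuclideanSpace ℝ (Fin n) → ℝ} {p e : EuclideanSpace ℝ (Fin n)}
    {r c : ℝ} (hr : 0 < r) (hc : 0 < c) (he : ‖e‖ = 1)
    (hd : ∀ x ∈ ball p (3 * r), DifferentiableAt ℝ g x)
    (hg : ∀ x ∈ ball p (3 * r), c ≤ ⟪gradient g x, e⟫) {ε : ℝ} (hε : 0 < ε)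
    {S : Set (EuclideanSpace ℝ (Fin n))} (hS : MeasurableSet S) (hSb : S ⊆ ball p r)
    (hSg : ∀ x ∈ S, -2 * ε ≤ g x ∧ g x < 0) :
    volume.real S ≤ ε * (volume.real (ball p (3 * r)) / (r * c)) := by
  set τ : ℝ := 2 * ε / c with hτ
  have hτ0 : 0 < τ := by positivity
  set N : ℕ := ⌊2 * r / τ⌋₊ with hN
  have hN1 : 2 * r / τ ≤ (N + 1 : ℕ) := by
    push_cast; exact (Nat.lt_floor_add_one _).le
  have hN2 : (N : ℝ) * τ ≤ 2 * r := by
    have := Nat.floor_le (a := 2 * r / τ) (by positivity)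
    rwa [le_div_iff₀ hτ0] at this
  let Sk : ℕ → Set (EuclideanSpace ℝ (Fin n)) := fun k => (fun x => x + (-(k * τ)) • e) ⁻¹' S
  have hSkm : ∀ k, MeasurableSet (Sk k) := fun k =>
    (measurable_add_const _) hS
  have hvol : ∀ k, volume (Sk k) = volume S := fun k =>
    measure_preimage_add_right volume _ S
  have hsub : ∀ k ∈ Finset.range (N + 1), Sk k ⊆ ball p (3 * r) := by
    intro k hk x hx
    have h1 : x + (-(k * τ)) • e ∈ ball p r := hSb hx
    rw [mem_ball, dist_eq_norm] at *
    have h2 : x - p = (x + (-(k * τ)) • e - p) + (k * τ) • e := by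
      rw [neg_smul]; abel
    rw [h2]
    have h3 : ‖((k : ℝ) * τ) • e‖ = k * τ := by
      rw [norm_smul, he, mul_one, Real.norm_of_nonneg (by positivity)]
    have h4 : (k : ℝ) * τ ≤ N * τ := by
      have : (k : ℝ) ≤ N := by exact_mod_cast Nat.lt_succ_iff.mp (Finset.mem_range.mp hk)
      gcongr
    calc _ ≤ _ := norm_add_le _ _
      _ < 3 * r := by rw [h3]; linarith
  have key : ∀ k l : ℕ, k < l → Disjoint (Sk k) (Sk l) := by
    intro k l hkl
    rw [Set.disjoint_left]
    intro z hzk hzl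
    have hx : z + (-(k * τ)) • e ∈ S := hzk
    have hy : z + (-(l * τ)) • e ∈ S := hzl
    have hb : ball p r ⊆ ball p (3 * r) := ball_subset_ball (by linarith)
    have heq : z + (-(k * τ)) • e = (z + (-(l * τ)) • e) + ((l - k : ℝ) * τ) • e := by
      rw [add_assoc, ← add_smul]; congr 2; ring
    have hlk : (1:ℝ) ≤ l - k := by
      have : (k:ℝ) + 1 ≤ l := by exact_mod_cast hkl
      linarith
    have := mvt_aux (convex_ball p (3 * r)) hd hg (y := z + (-(l * τ)) • e)
      (s := (l - k : ℝ) * τ) (by positivity) (hb (hSb hy)) (by rw [← heq]; exact hb (hSb hx))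
    rw [← heq] at this
    have h1 := (hSg _ hx).2
    have h2 := (hSg _ hy).1
    have h3 : c * τ = 2 * ε := by rw [hτ]; field_simp
    have h4 : c * τ ≤ c * ((l - k : ℝ) * τ) := by
      have : τ ≤ (l - k : ℝ) * τ := by nlinarith
      gcongr
    linarith
  have hdisj : ((Finset.range (N + 1) : Finset ℕ) : Set ℕ).PairwiseDisjoint Sk := by
    intro k _ l _ hkl
    rcases lt_or_gt_of_ne hkl with h | h
    · exact key k l h
    · exact (key l k h).symm
  have hsum := measure_biUnion_finset (μ := volume) hdisj (fun k _ => hSkm k)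
  have hle : volume (⋃ b ∈ Finset.range (N + 1), Sk b) ≤ volume (ball p (3 * r)) :=
    measure_mono (iUnion₂_subset hsub)
  rw [hsum] at hle
  simp only [hvol, Finset.sum_const, Finset.card_range, nsmul_eq_mul] at hle
  have hle2 : ((N + 1 : ℕ) : ℝ) * volume.real S ≤ volume.real (ball p (3 * r)) := by
    have := ENNReal.toReal_mono (measure_ball_lt_top).ne hle
    rwa [ENNReal.toReal_mul, ENNReal.toReal_natCast] at this
  have h5 : 2 * r / τ * volume.real S ≤ volume.real (ball p (3 * r)) :=
    le_trans (mul_le_mul_of_nonneg_right hN1 measureReal_nonneg) hle2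
  have h6 : 2 * r / τ = r * c / ε := by rw [hτ]; field_simp
  rw [h6] at h5
  have h7 : volume.real S = ε * ((r * c / ε * volume.real S) / (r * c)) := by
    field_simp
  rw [h7]
  gcongr

/-- Two local defining functions of `Ω` have parallel gradients at a boundary point. -/
lemma normal_unique_aux {Ω V V' : Set (EuclideanSpace ℝ (Fin n))}
    {g g' : EuclideanSpace ℝ (Fin n) → ℝ} {q Y : EuclideanSpace ℝ (Fin n)}
    (hV : IsOpen V) (hV' : IsOpen V') (hq : q ∈ V) (hq' : q ∈ V')
    (hd : DifferentiableAt ℝ g q) (hd' : DifferentiableAt ℝ g' q)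
    (h0 : g q = 0) (h0' : g' q = 0) (hn' : gradient g' q ≠ 0)
    (hΩ : Ω ∩ V = {x ∈ V | g x < 0}) (hΩ' : Ω ∩ V' = {x ∈ V' | g' x < 0})
    (hY : ⟪Y, gradient g' q⟫ = 0) : ⟪Y, gradient g q⟫ = 0 := by
  have hder : ∀ (G : EuclideanSpace ℝ (Fin n) → ℝ), DifferentiableAt ℝ G q → ∀ v,
      HasDerivAt (fun t : ℝ => G (q + t • v)) ⟪gradient G q, v⟫ 0 := by
    intro G hG v
    have h2 : HasDerivAt (fun t : ℝ => q + t • v) v 0 := by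
      simpa using ((hasDerivAt_id (0:ℝ)).smul_const v).const_add q
    rw [inner_gradient_left]
    have h1 : HasFDerivAt G (fderiv ℝ G q) (q + (0:ℝ) • v) := by simpa using hG.hasFDerivAt
    exact h1.comp_hasDerivAt 0 h2
  have hcone : ∀ v, ⟪gradient g q, v⟫ < 0 → ⟪gradient g' q, v⟫ ≤ 0 := by
    intro v hv
    by_contra! hcon
    have hcont : Tendsto (fun t : ℝ => q + t • v) (𝓝 0) (𝓝 q) := by
      have : Continuous (fun t : ℝ => q + t • v) := by fun_prop
      simpa using this.tendsto 0
    have e1 : ∀ᶠ t in 𝓝[>] (0:ℝ), q + t • v ∈ V :=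
      (hcont.eventually (hV.mem_nhds hq)).filter_mono nhdsWithin_le_nhds
    have e2 : ∀ᶠ t in 𝓝[>] (0:ℝ), q + t • v ∈ V' :=
      (hcont.eventually (hV'.mem_nhds hq')).filter_mono nhdsWithin_le_nhds
    have s1 := hasDerivWithinAt_iff_tendsto_slope.mp ((hder g hd v).hasDerivWithinAt (s := Ioi 0))
    have s2 := hasDerivWithinAt_iff_tendsto_slope.mp ((hder g' hd' v).hasDerivWithinAt (s := Ioi 0))
    have hset : Ioi (0:ℝ) \ {0} = Ioi 0 := by simp
    rw [hset] at s1 s2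
    have e3 := s1.eventually (gt_mem_nhds hv)
    have e4 := s2.eventually (lt_mem_nhds hcon)
    obtain ⟨t, ht1, ht2, ht3, ht4, ht0⟩ :=
      (e1.and (e2.and (e3.and (e4.and self_mem_nhdsWithin)))).exists
    have ht0 : 0 < t := ht0
    simp only [slope_def_field, zero_smul, add_zero, h0, h0', sub_zero] at ht3 ht4
    have a1 : g (q + t • v) < 0 := by
      by_contra! h
      exact absurd (div_nonneg h ht0.le) (not_le.mpr ht3)
    have a2 : 0 < g' (q + t • v) := by
      by_contra! h
      exact absurd (div_nonpos_of_nonpos_of_nonneg h ht0.le) (not_le.mpr ht4)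
    have m1 : q + t • v ∈ Ω ∩ V := by rw [hΩ]; exact ⟨ht1, a1⟩
    have m2 : q + t • v ∈ Ω ∩ V' := ⟨m1.1, ht2⟩
    rw [hΩ'] at m2
    exact absurd m2.2 (not_lt.mpr a2.le)
  by_contra hA
  set A := gradient g q
  set B := gradient g' q
  have h1 := hcone ((-(|⟪A, B⟫| + 1) / ⟪Y, A⟫) • Y + B) (by
    rw [inner_add_right, inner_smul_right, real_inner_comm Y A, div_mul_cancel₀ _ hA]
    linarith [le_abs_self ⟪A, B⟫])
  rw [inner_add_right, inner_smul_right, real_inner_comm Y B, hY, mul_zero, zero_add,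
    real_inner_self_eq_norm_sq] at h1
  have : 0 < ‖B‖ := norm_pos_iff.mpr hn'
  nlinarith

/-- Basic facts about a local defining function. -/
lemma defining_le_zero {Ω V : Set (EuclideanSpace ℝ (Fin n))}
    {g : EuclideanSpace ℝ (Fin n) → ℝ} {q : EuclideanSpace ℝ (Fin n)}
    (hV : IsOpen V) (hq : q ∈ V) (hc : ContinuousOn g V)
    (hΩ : Ω ∩ V = {x ∈ V | g x < 0}) (hcl : q ∈ closure Ω) : g q ≤ 0 := by
  by_contra! h
  have hopen : IsOpen (V ∩ g ⁻¹' Ioi 0) := hc.isOpen_inter_preimage hV isOpen_Ioi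
  obtain ⟨y, hy, hyΩ⟩ := mem_closure_iff.mp hcl _ hopen ⟨hq, h⟩
  have : y ∈ Ω ∩ V := ⟨hyΩ, hy.1⟩
  rw [hΩ] at this
  exact absurd this.2 (not_lt.mpr (le_of_lt hy.2))

lemma defining_ge_zero {Ω V : Set (EuclideanSpace ℝ (Fin n))}
    {g : EuclideanSpace ℝ (Fin n) → ℝ} {q : EuclideanSpace ℝ (Fin n)}
    (hq : q ∈ V) (hΩ : Ω ∩ V = {x ∈ V | g x < 0}) (hn : q ∉ Ω) : 0 ≤ g q := by
  by_contra! h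
  have : q ∈ Ω ∩ V := by rw [hΩ]; exact ⟨hq, h⟩
  exact hn this.1

/-- The integrand of the Green identity with test function `θ h`. -/
def greenI (X H : EuclideanSpace ℝ (Fin n) → EuclideanSpace ℝ (Fin n))
    (h F θ : EuclideanSpace ℝ (Fin n) → ℝ) (x : EuclideanSpace ℝ (Fin n)) : ℝ :=
  ⟪X x, θ x • H x + h x • gradient θ x⟫ - F x * (h x * θ x)

lemma integrableOn_aux {Ω K : Set (EuclideanSpace ℝ (Fin n))}
    {G : EuclideanSpace ℝ (Fin n) → ℝ} (hΩ : IsOpen Ω) (hK : IsCompact K)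
    (hG : ContinuousOn G (closure Ω)) (h0 : ∀ x, x ∉ K → G x = 0) : IntegrableOn G Ω := by
  have h1 : IntegrableOn G (closure Ω ∩ K) :=
    (hG.mono inter_subset_left).integrableOn_compact (hK.inter_left isClosed_closure)
  refine h1.of_forall_sdiff_eq_zero hΩ.measurableSet ?_
  intro x hx
  exact h0 x fun hxK => hx.2 ⟨subset_closure hx.1, hxK⟩

lemma greenI_zero {X H : EuclideanSpace ℝ (Fin n) → EuclideanSpace ℝ (Fin n)}
    {h F θ : EuclideanSpace ℝ (Fin n) → ℝ} {x : EuclideanSpace ℝ (Fin n)}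
    (hx : x ∉ tsupport θ) : greenI X H h F θ x = 0 := by
  simp [greenI, gradient_eq_zero_of_notMem_tsupport hx, image_eq_zero_of_notMem_tsupport hx]

lemma greenI_continuousOn {Ω : Set (EuclideanSpace ℝ (Fin n))}
    {X H : EuclideanSpace ℝ (Fin n) → EuclideanSpace ℝ (Fin n)}
    {h F θ : EuclideanSpace ℝ (Fin n) → ℝ}
    (hX : ContinuousOn X (closure Ω)) (hH : ContinuousOn H (closure Ω))
    (hh : ContinuousOn h (closure Ω)) (hF : ContinuousOn F (closure Ω))
    (hθ : ContDiff ℝ 1 θ) : ContinuousOn (greenI X H h F θ) (closure Ω) := by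
  have hg : ContinuousOn (gradient θ) (closure Ω) :=
    (continuousOn_gradient_aux isOpen_univ hθ.contDiffOn).mono (subset_univ _)
  have ht : ContinuousOn θ (closure Ω) := hθ.continuous.continuousOn
  unfold greenI
  exact (hX.inner ((ht.smul hH).add (hh.smul hg))).sub (hF.mul (hh.mul ht))

lemma greenI_integrableOn {Ω : Set (EuclideanSpace ℝ (Fin n))} (hΩ : IsOpen Ω)
    {X H : EuclideanSpace ℝ (Fin n) → EuclideanSpace ℝ (Fin n)}
    {h F θ : EuclideanSpace ℝ (Fin n) → ℝ}
    (hX : ContinuousOn X (closure Ω)) (hH : ContinuousOn H (closure Ω))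
    (hh : ContinuousOn h (closure Ω)) (hF : ContinuousOn F (closure Ω))
    (hθ : ContDiff ℝ 1 θ) (hθc : HasCompactSupport θ) :
    IntegrableOn (greenI X H h F θ) Ω :=
  integrableOn_aux hΩ hθc (greenI_continuousOn hX hH hh hF hθ) fun _ hx => greenI_zero hx

/-- If `Φ` is `C¹` on the open set `W` and vanishes off the compact `K ⊆ W`, then its
extension by zero is an admissible test function. -/
lemma isTestOn_aux {Ω W K : Set (EuclideanSpace ℝ (Fin n))}
    {Φ : EuclideanSpace ℝ (Fin n) → ℝ} (hW : IsOpen W) (hWΩ : W ⊆ Ω) (hK : IsCompact K)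
    (hKW : K ⊆ W) (hΦ : ContDiffOn ℝ 1 Φ W) (h0 : ∀ x, x ∉ K → Φ x = 0) : IsTestOn Ω Φ := by
  have hsupp : tsupport Φ ⊆ K := by
    refine closure_minimal ?_ hK.isClosed
    intro x hx
    by_contra h
    exact hx (h0 x h)
  have hcs : HasCompactSupport Φ := hK.of_isClosed_subset (isClosed_tsupport _) hsupp
  have hcd : ContDiff ℝ 1 Φ := by
    rw [contDiff_iff_contDiffAt]
    intro x
    by_cases hx : x ∈ K
    · exact hΦ.contDiffAt (hW.mem_nhds (hKW hx))
    · have : Φ =ᶠ[𝓝 x] fun _ => (0:ℝ) := by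
        filter_upwards [hK.isClosed.isOpen_compl.mem_nhds hx] with y hy using h0 y hy
      exact contDiffAt_const.congr_of_eventuallyEq this
  exact ⟨hcd.lipschitzWith_of_hasCompactSupport hcs (by simp), hcs, hsupp.trans (hKW.trans hWΩ)⟩

/-- Green identity for `θ` supported inside `Ω`. -/
lemma green_interior {Ω : Set (EuclideanSpace ℝ (Fin n))} (hΩ : IsOpen Ω)
    {X H : EuclideanSpace ℝ (Fin n) → EuclideanSpace ℝ (Fin n)}
    {h F θ : EuclideanSpace ℝ (Fin n) → ℝ}
    (hX : ContinuousOn X (closure Ω)) (hH : ContinuousOn H (closure Ω))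
    (hh : ContinuousOn h (closure Ω)) (hF : ContinuousOn F (closure Ω))
    (hh1 : ContDiffOn ℝ 1 h Ω) (hhH : ∀ x ∈ Ω, HasGradientAt h (H x) x)
    (hweak : ∀ Φ, IsTestOn Ω Φ → ∫ x in Ω, ⟪X x, gradient Φ x⟫ = ∫ x in Ω, F x * Φ x)
    (hθ : ContDiff ℝ 1 θ) (hθc : HasCompactSupport θ) (hs : tsupport θ ⊆ Ω) :
    ∫ x in Ω, greenI X H h F θ x = 0 := by
  have htest : IsTestOn Ω (fun x => θ x * h x) :=
    isTestOn_aux hΩ subset_rfl hθc hs (hθ.contDiffOn.mul hh1)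
      (fun x hx => by simp [image_eq_zero_of_notMem_tsupport hx])
  have hw := hweak _ htest
  have hgrad : ∀ x ∈ Ω, ⟪X x, gradient (fun x => θ x * h x) x⟫
      = ⟪X x, θ x • H x + h x • gradient θ x⟫ := by
    intro x hx
    rw [(hasGradientAt_mul_aux (hθ.differentiable (by simp) x).hasGradientAt (hhH x hx)).gradient]
  rw [setIntegral_congr_fun hΩ.measurableSet hgrad] at hw
  have hg : ContinuousOn (gradient θ) (closure Ω) :=
    (continuousOn_gradient_aux isOpen_univ hθ.contDiffOn).mono (subset_univ _)
  have ht : ContinuousOn θ (closure Ω) := hθ.continuous.continuousOn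
  have i1 : IntegrableOn (fun x => ⟪X x, θ x • H x + h x • gradient θ x⟫) Ω :=
    integrableOn_aux hΩ hθc (hX.inner ((ht.smul hH).add (hh.smul hg)))
      (fun x hx => by
        simp [gradient_eq_zero_of_notMem_tsupport hx, image_eq_zero_of_notMem_tsupport hx])
  have i2 : IntegrableOn (fun x => F x * (h x * θ x)) Ω :=
    integrableOn_aux hΩ hθc (hF.mul (hh.mul ht))
      (fun x hx => by simp [image_eq_zero_of_notMem_tsupport hx])
  unfold greenI
  rw [integral_sub i1 i2, hw, sub_eq_zero]
  simp only [mul_comm]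

/-- Green identity for `θ` supported near a boundary point. -/
lemma green_boundary {Ω : Set (EuclideanSpace ℝ (Fin n))} (hΩ : IsOpen Ω)
    {X H : EuclideanSpace ℝ (Fin n) → EuclideanSpace ℝ (Fin n)}
    {h F : EuclideanSpace ℝ (Fin n) → ℝ}
    (hX : ContinuousOn X (closure Ω)) (hH : ContinuousOn H (closure Ω))
    (hh : ContinuousOn h (closure Ω)) (hF : ContinuousOn F (closure Ω))
    (hh1 : ContDiffOn ℝ 1 h Ω) (hhH : ∀ x ∈ Ω, HasGradientAt h (H x) x)
    (hweak : ∀ Φ, IsTestOn Ω Φ → ∫ x in Ω, ⟪X x, gradient Φ x⟫ = ∫ x in Ω, F x * Φ x)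
    {V : Set (EuclideanSpace ℝ (Fin n))} {g : EuclideanSpace ℝ (Fin n) → ℝ}
    {p : EuclideanSpace ℝ (Fin n)} (hV : IsOpen V) (hp : p ∈ V) (hg : ContDiffOn ℝ 1 g V)
    (hgp : gradient g p ≠ 0) (hΩV : Ω ∩ V = {x ∈ V | g x < 0})
    (hbd : ∀ x ∈ frontier Ω, x ∈ V → h x * ⟪X x, gradient g x⟫ = 0) :
    ∃ U, IsOpen U ∧ p ∈ U ∧ ∀ θ : EuclideanSpace ℝ (Fin n) → ℝ, ContDiff ℝ 1 θ →
      HasCompactSupport θ → tsupport θ ⊆ U → ∫ x in Ω, greenI X H h F θ x = 0 := by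
  have hgc : ContinuousOn g V := hg.continuousOn
  have hgg : ContinuousOn (gradient g) V := continuousOn_gradient_aux hV hg
  have hgd : ∀ x ∈ V, DifferentiableAt ℝ g x := fun x hx =>
    (hg.differentiableOn (by simp)).differentiableAt (hV.mem_nhds hx)
  -- choice of the direction and of the radius
  obtain ⟨e, he, c, hc, r, hr, hrV, hre⟩ : ∃ e : EuclideanSpace ℝ (Fin n), ‖e‖ = 1 ∧ ∃ c > 0,
      ∃ r > 0, ball p (3 * r) ⊆ V ∧ ∀ x ∈ ball p (3 * r), c ≤ ⟪gradient g x, e⟫ := by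
    have hpos : 0 < ‖gradient g p‖ := norm_pos_iff.mpr hgp
    refine ⟨‖gradient g p‖⁻¹ • gradient g p, by rw [norm_smul, norm_inv, norm_norm]; field_simp,
      ‖gradient g p‖ / 2, by positivity, ?_⟩
    have hval : ⟪gradient g p, ‖gradient g p‖⁻¹ • gradient g p⟫ = ‖gradient g p‖ := by
      rw [inner_smul_right, real_inner_self_eq_norm_sq]; field_simp
    have hcont : ContinuousAt
        (fun x => ⟪gradient g x, ‖gradient g p‖⁻¹ • gradient g p⟫) p :=
      (hgg.continuousAt (hV.mem_nhds hp)).inner continuousAt_const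
    have hev : ∀ᶠ x in 𝓝 p, ‖gradient g p‖ / 2 <
        ⟪gradient g x, ‖gradient g p‖⁻¹ • gradient g p⟫ := by
      apply hcont.eventually (lt_mem_nhds _)
      simp only [hval]; linarith
    obtain ⟨ρ, hρ, hball⟩ := Metric.eventually_nhds_iff_ball.mp (hev.and (hV.mem_nhds hp))
    refine ⟨ρ / 3, by positivity, ?_, ?_⟩
    · intro x hx; exact (hball x (by convert hx using 2; ring)).2
    · intro x hx; exact (hball x (by convert hx using 2; ring)).1.le
  have hbV : ball p r ⊆ V := (ball_subset_ball (by linarith)).trans hrV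
  refine ⟨ball p r, isOpen_ball, mem_ball_self hr, ?_⟩
  intro θ hθ hθc hθs
  have hθV : tsupport θ ⊆ V := hθs.trans hbV
  set W : Set (EuclideanSpace ℝ (Fin n)) := Ω ∩ V with hWdef
  have hW : IsOpen W := hΩ.inter hV
  have hWΩ : W ⊆ Ω := inter_subset_left
  have hWV : W ⊆ V := inter_subset_right
  have hWg : ∀ x ∈ W, g x < 0 := fun x hx => by rw [hΩV] at hx; exact hx.2
  have hWcl : W ⊆ closure Ω := hWΩ.trans subset_closure
  -- the cutoff
  set χ : ℝ → ℝ := fun s => Real.smoothTransition (-1 - s) with hχ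
  have hχs : ContDiff ℝ 1 χ :=
    (Real.smoothTransition.contDiff (n := 1)).comp (contDiff_const.sub contDiff_id)
  have hχd : ∀ s, HasDerivAt χ (deriv χ s) s := fun s =>
    (hχs.differentiable (by simp) s).hasDerivAt
  have hχ1 : ∀ s ≤ -2, χ s = 1 := fun s hs => Real.smoothTransition.one_of_one_le (by linarith)
  have hχ0 : ∀ s ≥ -1, χ s = 0 := fun s hs => Real.smoothTransition.zero_of_nonpos (by linarith)
  have hχd0 : ∀ s < -2, deriv χ s = 0 := by
    intro s hs
    have : χ =ᶠ[𝓝 s] fun _ => (1:ℝ) := by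
      filter_upwards [Iio_mem_nhds hs] with t ht using hχ1 t (le_of_lt ht)
    rw [this.deriv_eq]; simp
  have hχdc : Continuous (deriv χ) := hχs.continuous_deriv le_rfl
  obtain ⟨M, hM⟩ := (isCompact_Icc (a := (-2:ℝ)) (b := 0)).exists_bound_of_continuousOn
    hχdc.continuousOn
  have hM0 : 0 ≤ M := (norm_nonneg _).trans (hM 0 (by norm_num))
  -- the flux through the level sets
  set G : EuclideanSpace ℝ (Fin n) → ℝ := fun x => θ x * (h x * ⟪X x, gradient g x⟫) with hG
  set Q : Set (EuclideanSpace ℝ (Fin n)) := closure Ω ∩ tsupport θ with hQ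
  have hQc : IsCompact Q := IsCompact.inter_left hθc isClosed_closure
  have hQV : Q ⊆ V := inter_subset_right.trans hθV
  have hGc : ContinuousOn G Q :=
    hθ.continuous.continuousOn.mul ((hh.mono inter_subset_left).mul
      ((hX.mono inter_subset_left).inner (hgg.mono hQV)))
  have hGsmall : ∀ δ > 0, ∃ m > 0, ∀ x ∈ Q, -m < g x → |G x| < δ := by
    intro δ hδ
    have hQ' : IsCompact (Q ∩ (fun x => |G x|) ⁻¹' Ici δ) :=
      hQc.of_isClosed_subset
        ((continuous_abs.comp_continuousOn hGc).preimage_isClosed_of_isClosed hQc.isClosed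
          isClosed_Ici) inter_subset_left
    obtain ⟨m, hm, hm'⟩ := hQ'.exists_forall_le' (f := fun x => - g x) (a := 0)
      ((hgc.mono (inter_subset_left.trans hQV)).neg) (by
        intro x hx
        have hxV : x ∈ V := hQV hx.1
        have h1 : g x ≤ 0 := defining_le_zero hV hxV hgc hΩV hx.1.1
        rcases h1.eq_or_lt with h2 | h2
        · exfalso
          have hxn : x ∉ Ω := by
            intro hxΩ
            have := hWg x ⟨hxΩ, hxV⟩
            linarith
          have hfr : x ∈ frontier Ω := by
            rw [hΩ.frontier_eq]; exact ⟨hx.1.1, hxn⟩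
          have : G x = 0 := by simp only [hG]; rw [hbd x hfr hxV, mul_zero]
          have h3 : δ ≤ |G x| := hx.2
          rw [this, abs_zero] at h3
          linarith
        · simpa using h2)
    refine ⟨m, hm, fun x hx hgx => ?_⟩
    by_contra! hcon
    have := hm' x ⟨hx, hcon⟩
    linarith
  -- the sequence of scales
  set ε : ℕ → ℝ := fun k => 1 / ((k : ℝ) + 1) with hε
  have hε0 : ∀ k, 0 < ε k := fun k => by simp only [hε]; positivity
  have hεlim : Tendsto ε atTop (𝓝 0) := tendsto_one_div_add_atTop_nhds_zero_nat
  set I : EuclideanSpace ℝ (Fin n) → ℝ := greenI X H h F θ with hI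
  have hIc : ContinuousOn I (closure Ω) := greenI_continuousOn hX hH hh hF hθ
  have hIint : IntegrableOn I Ω := greenI_integrableOn hΩ hX hH hh hF hθ hθc
  have hIW : ∫ x in Ω, I x = ∫ x in W, I x :=
    setIntegral_eq_of_subset_of_forall_sdiff_eq_zero hΩ.measurableSet hWΩ (fun x hx =>
      greenI_zero fun hxt => hx.2 ⟨hx.1, hθV hxt⟩)
  have hχc : ∀ k, ContinuousOn (fun x => χ (g x / ε k)) W := fun k =>
    hχs.continuous.comp_continuousOn ((hgc.mono hWV).div_const _)
  have hlim1 : Tendsto (fun k => ∫ x in W, χ (g x / ε k) * I x) atTop (𝓝 (∫ x in W, I x)) := by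
    refine tendsto_integral_of_dominated_convergence (fun x => ‖I x‖) ?_ ?_ ?_ ?_
    · intro k
      exact ((hχc k).mul (hIc.mono hWcl)).aestronglyMeasurable hW.measurableSet
    · exact (hIint.mono_set hWΩ).norm
    · intro k
      refine Eventually.of_forall fun x => ?_
      rw [norm_mul]
      have : ‖χ (g x / ε k)‖ ≤ 1 := by
        rw [Real.norm_of_nonneg (Real.smoothTransition.nonneg _)]
        exact Real.smoothTransition.le_one _
      exact mul_le_of_le_one_left (norm_nonneg _) this
    · refine (ae_restrict_iff' hW.measurableSet).mpr (Eventually.of_forall fun x hx => ?_)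
      have hgx := hWg x hx
      apply tendsto_const_nhds.congr'
      have : ∀ᶠ k in atTop, ε k < -g x / 2 := hεlim.eventually (gt_mem_nhds (by linarith))
      filter_upwards [this] with k hk
      rw [hχ1, one_mul]
      rw [div_le_iff₀ (hε0 k)]; linarith
  -- the boundary term
  set B : ℕ → EuclideanSpace ℝ (Fin n) → ℝ := fun k x => deriv χ (g x / ε k) / ε k * G x with hB
  have hGcW : ContinuousOn G W :=
    hθ.continuous.continuousOn.mul ((hh.mono hWcl).mul ((hX.mono hWcl).inner (hgg.mono hWV)))
  have hident : ∀ k, ∫ x in W, χ (g x / ε k) * I x = - ∫ x in W, B k x := by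
    intro k
    set Φ : EuclideanSpace ℝ (Fin n) → ℝ :=
      W.indicator (fun x => (θ x * h x) * χ (g x / ε k)) with hΦ
    set K : Set (EuclideanSpace ℝ (Fin n)) := Q ∩ g ⁻¹' Iic (-ε k) with hK
    have hKc : IsCompact K := hQc.of_isClosed_subset
      ((hgc.mono hQV).preimage_isClosed_of_isClosed hQc.isClosed isClosed_Iic) inter_subset_left
    have hKW : K ⊆ W := by
      intro x hx
      rw [hΩV]
      refine ⟨hQV hx.1, ?_⟩
      have h1 : g x ≤ -ε k := hx.2
      linarith [hε0 k]
    have hΦ0 : ∀ x, x ∉ K → Φ x = 0 := by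
      intro x hx
      by_cases hxW : x ∈ W
      · rw [hΦ, indicator_of_mem hxW]
        by_cases hxt : x ∈ tsupport θ
        · have : -1 ≤ g x / ε k := by
            rw [le_div_iff₀ (hε0 k)]
            by_contra! hcon
            exact hx ⟨⟨hWcl hxW, hxt⟩, by simp only [mem_preimage, mem_Iic]; linarith⟩
          rw [hχ0 _ this, mul_zero]
        · rw [image_eq_zero_of_notMem_tsupport hxt]; ring
      · exact indicator_of_notMem hxW _
    have hχk : ContDiffOn ℝ 1 (fun x => χ (g x / ε k)) W :=
      hχs.comp_contDiffOn ((hg.mono hWV).div_const _)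
    have hΦ1 : ContDiffOn ℝ 1 Φ W := by
      refine ((hθ.contDiffOn.mul (hh1.mono hWΩ)).mul hχk).congr ?_
      intro x hx
      rw [hΦ, indicator_of_mem hx]
    have hw := hweak Φ (isTestOn_aux hW hWΩ hKc hKW hΦ1 hΦ0)
    have hgradΦ : ∀ x ∈ W, gradient Φ x = χ (g x / ε k) • (θ x • H x + h x • gradient θ x)
        + ((deriv χ (g x / ε k) / ε k) * (θ x * h x)) • gradient g x := by
      intro x hx
      have h1 := hasGradientAt_mul_aux (hθ.differentiable (by simp) x).hasGradientAt
        (hhH x hx.1)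
      have h2 : HasGradientAt (fun y => χ (g y / ε k))
          ((deriv χ (g x / ε k) * (1 / ε k)) • gradient g x) x := by
        refine hasGradientAt_comp_aux (T := fun s => χ (s / ε k)) ?_ (hgd x hx.2).hasGradientAt
        exact HasDerivAt.comp (g x) (hχd (g x / ε k)) ((hasDerivAt_id (g x)).div_const (ε k))
      have h3 := hasGradientAt_mul_aux h1 h2
      have h4 : Φ =ᶠ[𝓝 x] fun y => (θ y * h y) * χ (g y / ε k) := by
        filter_upwards [hW.mem_nhds hx] with y hy
        rw [hΦ, indicator_of_mem hy]
      rw [h4.gradient_eq, h3.gradient, smul_smul, add_comm]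
      congr 2
      ring
    have hgΦ0 : ∀ x, x ∉ W → gradient Φ x = 0 := by
      intro x hx
      have : Φ =ᶠ[𝓝 x] fun _ => (0:ℝ) := by
        filter_upwards [hKc.isClosed.isOpen_compl.mem_nhds (fun h => hx (hKW h))] with y hy
          using hΦ0 y hy
      rw [this.gradient_eq]; simp
    rw [setIntegral_eq_of_subset_of_forall_sdiff_eq_zero hΩ.measurableSet hWΩ
      (fun x hx => by rw [hgΦ0 x hx.2, inner_zero_right]),
      setIntegral_eq_of_subset_of_forall_sdiff_eq_zero (f := fun x => F x * Φ x)
        hΩ.measurableSet hWΩ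
      (fun x hx => by rw [hΦ0 x (fun h => hx.2 (hKW h)), mul_zero])] at hw
    -- integrability
    have iχ : IntegrableOn (fun x => χ (g x / ε k) * I x) W := by
      refine Integrable.mono (hIint.mono_set hWΩ)
        (((hχc k).mul (hIc.mono hWcl)).aestronglyMeasurable hW.measurableSet)
        (Eventually.of_forall fun x => ?_)
      rw [norm_mul]
      have : ‖χ (g x / ε k)‖ ≤ 1 := by
        rw [Real.norm_of_nonneg (Real.smoothTransition.nonneg _)]
        exact Real.smoothTransition.le_one _
      exact mul_le_of_le_one_left (norm_nonneg _) this
    have iB : IntegrableOn (B k) W := by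
      have h1 : IntegrableOn (B k) Q := by
        refine ContinuousOn.integrableOn_compact hQc ?_
        exact ((hχdc.comp_continuousOn ((hgc.mono hQV).div_const _)).div_const _).mul hGc
      refine h1.of_forall_sdiff_eq_zero hW.measurableSet ?_
      intro x hx
      have : x ∉ tsupport θ := fun hxt => hx.2 ⟨hWcl hx.1, hxt⟩
      simp [hB, hG, image_eq_zero_of_notMem_tsupport this]
    have iF : IntegrableOn (fun x => F x * Φ x) W := by
      have h1 : IntegrableOn (fun x => F x * Φ x) K :=
        ContinuousOn.integrableOn_compact hKc
          ((hF.mono (hKW.trans hWcl)).mul (hΦ1.continuousOn.mono hKW))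
      refine h1.of_forall_sdiff_eq_zero hW.measurableSet ?_
      intro x hx
      rw [hΦ0 x hx.2, mul_zero]
    have hpt : ∀ x ∈ W, ⟪X x, gradient Φ x⟫ = χ (g x / ε k) * I x + B k x + F x * Φ x := by
      intro x hx
      rw [hgradΦ x hx]
      simp only [hI, greenI, hB, hG, hΦ, indicator_of_mem hx, inner_add_right, inner_smul_right]
      ring
    have e1 : ∫ x in W, (χ (g x / ε k) * I x + B k x + F x * Φ x)
        = (∫ x in W, (χ (g x / ε k) * I x + B k x)) + ∫ x in W, F x * Φ x :=
      integral_add (iχ.add iB) iF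
    have e2 : ∫ x in W, (χ (g x / ε k) * I x + B k x)
        = (∫ x in W, χ (g x / ε k) * I x) + ∫ x in W, B k x :=
      integral_add iχ iB
    rw [setIntegral_congr_fun hW.measurableSet hpt, e1, e2] at hw
    linarith
  -- estimate of the boundary term
  set A : ℝ := volume.real (ball p (3 * r)) / (r * c) with hA
  have hA0 : 0 ≤ A := by positivity
  have hest : ∀ δ > 0, ∀ᶠ k in atTop, ‖∫ x in W, B k x‖ ≤ M * δ * A := by
    intro δ hδ
    obtain ⟨m, hm, hm'⟩ := hGsmall δ hδ
    have hev : ∀ᶠ k in atTop, ε k < m / 2 := hεlim.eventually (gt_mem_nhds (by linarith))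
    filter_upwards [hev] with k hk
    set S : Set (EuclideanSpace ℝ (Fin n)) :=
      (W ∩ tsupport θ) \ (W ∩ g ⁻¹' Iio (-2 * ε k)) with hS
    have hSm : MeasurableSet S :=
      (hW.measurableSet.inter (isClosed_tsupport _).measurableSet).diff
        ((hgc.mono hWV).isOpen_inter_preimage hW isOpen_Iio).measurableSet
    have hSW : S ⊆ W := fun x hx => hx.1.1
    have hSb : S ⊆ ball p r := fun x hx => hθs hx.1.2
    have hSg : ∀ x ∈ S, -2 * ε k ≤ g x ∧ g x < 0 := by
      intro x hx
      refine ⟨?_, hWg x hx.1.1⟩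
      by_contra! hcon
      exact hx.2 ⟨hx.1.1, hcon⟩
    have hvol := layer_measure hr hc he (fun x hx => hgd x (hrV hx)) hre (hε0 k) hSm hSb hSg
    rw [setIntegral_eq_of_subset_of_forall_sdiff_eq_zero hW.measurableSet hSW (fun x hx => by
      by_cases hxt : x ∈ tsupport θ
      · have hlt : g x < -2 * ε k := by
          by_contra! hcon
          exact hx.2 ⟨⟨hx.1, hxt⟩, fun hh => absurd hh.2 (not_lt.mpr hcon)⟩
        have : g x / ε k < -2 := by rw [div_lt_iff₀ (hε0 k)]; exact hlt
        simp [hB, hχd0 _ this]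
      · simp [hB, hG, image_eq_zero_of_notMem_tsupport hxt])]
    have hbound : ∀ x ∈ S, ‖B k x‖ ≤ M / ε k * δ := by
      intro x hx
      have h1 := hSg x hx
      have h2 : ‖deriv χ (g x / ε k)‖ ≤ M := by
        apply hM
        constructor
        · rw [le_div_iff₀ (hε0 k)]; exact h1.1
        · exact div_nonpos_of_nonpos_of_nonneg h1.2.le (hε0 k).le
      have h3 : |G x| < δ := hm' x ⟨hWcl hx.1.1, hx.1.2⟩ (by linarith)
      simp only [hB]
      rw [norm_mul, norm_div, Real.norm_of_nonneg (hε0 k).le, Real.norm_eq_abs (G x)]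
      have := hε0 k
      gcongr
    have hfin : volume S < ∞ := (measure_mono hSb).trans_lt measure_ball_lt_top
    calc _ ≤ M / ε k * δ * volume.real S := norm_setIntegral_le_of_norm_le_const hfin hbound
      _ ≤ M / ε k * δ * (ε k * A) := by
        have := hε0 k
        gcongr
      _ = M * δ * A := by
        have := (hε0 k).ne'
        field_simp
  have hlim2 : Tendsto (fun k => ∫ x in W, χ (g x / ε k) * I x) atTop (𝓝 0) := by
    rw [Metric.tendsto_atTop']
    intro η hη
    have hMA : 0 < M * A + 1 := by positivity
    have := hest (η / (M * A + 1)) (by positivity)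
    obtain ⟨N, hN⟩ := eventually_atTop.mp this
    refine ⟨N, fun k hk => ?_⟩
    rw [dist_zero_right, hident k, norm_neg]
    refine (hN k hk.le).trans_lt ?_
    have : M * (η / (M * A + 1)) * A = η * (M * A / (M * A + 1)) := by ring
    rw [this]
    have h1 : M * A / (M * A + 1) < 1 := by rw [div_lt_one hMA]; linarith
    nlinarith
  rw [hIW]
  exact tendsto_nhds_unique hlim1 hlim2

lemma greenI_sum {ι : Type*} [Fintype ι]
    {X H : EuclideanSpace ℝ (Fin n) → EuclideanSpace ℝ (Fin n)}
    {h F θ : EuclideanSpace ℝ (Fin n) → ℝ} {ζ : ι → EuclideanSpace ℝ (Fin n) → ℝ}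
    (hζ : ∀ i, ContDiff ℝ 1 (ζ i)) (hsum : ∀ x, θ x = ∑ i, ζ i x)
    (x : EuclideanSpace ℝ (Fin n)) :
    greenI X H h F θ x = ∑ i, greenI X H h F (ζ i) x := by
  have hθ : θ = fun x => ∑ i, ζ i x := funext hsum
  have hg : gradient θ x = ∑ i, gradient (ζ i) x := by
    unfold gradient
    rw [hθ, fderiv_fun_sum (fun i _ => (hζ i).differentiable (by simp) x), map_sum]
  unfold greenI
  rw [hg, hsum x, Finset.sum_sub_distrib, ← inner_sum, Finset.sum_add_distrib,
    ← Finset.sum_smul, ← Finset.smul_sum, ← Finset.mul_sum, ← Finset.mul_sum]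

/-- Gluing of the local Green identities by a partition of unity. -/
lemma green_global {Ω : Set (EuclideanSpace ℝ (Fin n))} (hΩ : IsOpen Ω)
    {X H : EuclideanSpace ℝ (Fin n) → EuclideanSpace ℝ (Fin n)}
    {h F θ : EuclideanSpace ℝ (Fin n) → ℝ}
    (hX : ContinuousOn X (closure Ω)) (hH : ContinuousOn H (closure Ω))
    (hh : ContinuousOn h (closure Ω)) (hF : ContinuousOn F (closure Ω))
    (hlocal : ∀ p : EuclideanSpace ℝ (Fin n), ∃ U, IsOpen U ∧ p ∈ U ∧
      ∀ θ : EuclideanSpace ℝ (Fin n) → ℝ, ContDiff ℝ 1 θ → HasCompactSupport θ →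
        tsupport θ ⊆ U → ∫ x in Ω, greenI X H h F θ x = 0)
    (hθ : ContDiff ℝ 1 θ) (hθc : HasCompactSupport θ) :
    ∫ x in Ω, greenI X H h F θ x = 0 := by
  choose U hUo hUp hU using hlocal
  obtain ⟨t, ht⟩ := IsCompact.elim_finite_subcover (s := tsupport θ) hθc U hUo
    (fun x _ => mem_iUnion.mpr ⟨x, hUp x⟩)
  obtain ⟨ζ, hζ⟩ := SmoothPartitionOfUnity.exists_isSubordinate
    (modelWithCornersSelf ℝ (EuclideanSpace ℝ (Fin n))) (isClosed_tsupport θ)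
    (fun i : t => U i) (fun i => hUo i) (by
      intro x hx
      obtain ⟨i, hi, hxi⟩ := mem_iUnion₂.mp (ht hx)
      exact mem_iUnion.mpr ⟨⟨i, hi⟩, hxi⟩)
  have hζc : ∀ i, ContDiff ℝ 1 (fun x => ζ i x) := fun i =>
    ((ζ i).contMDiff.contDiff).of_le (by exact_mod_cast le_top)
  have hcd : ∀ i, ContDiff ℝ 1 (fun x => ζ i x * θ x) := fun i => (hζc i).mul hθ
  have hcs : ∀ i, HasCompactSupport (fun x => ζ i x * θ x) := fun i => hθc.mul_left
  have hsum : ∀ x, θ x = ∑ i, ζ i x * θ x := by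
    intro x
    rw [← Finset.sum_mul]
    by_cases hx : x ∈ tsupport θ
    · have := ζ.sum_eq_one hx
      rw [finsum_eq_sum_of_fintype] at this
      rw [this, one_mul]
    · rw [image_eq_zero_of_notMem_tsupport hx, mul_zero]
  simp only [greenI_sum hcd hsum]
  rw [integral_finsetSum _ (fun i _ => greenI_integrableOn hΩ hX hH hh hF (hcd i) (hcs i))]
  refine Finset.sum_eq_zero fun i _ => hU i _ (hcd i) (hcs i) ?_
  exact (tsupport_mul_subset_left).trans (hζ i)

/-- Proposition 2.7(ii) of the paper, in `ℝⁿ` with `Ω₀ = Ω`: the calibration estimate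
when `u` is constant on `∂⋆Ω`, `-C₀ ≤ f(u) ≤ 0` and `u` is bounded below. -/
theorem calibration_estimate_constant_boundary
    (n : ℕ) (Ω : Set (EuclideanSpace ℝ (Fin n)))
    (η : EuclideanSpace ℝ (Fin n) → EuclideanSpace ℝ (Fin n))
    (hΩ : IsCkDomainWithNormal 1 Ω η)
    (a : ℝ → ℝ) (hac : ContinuousOn a (Ici 0)) (ha0 : ∀ t ≥ (0 : ℝ), 0 ≤ a t)
    (hbd : ∃ Cb, ∀ t > (0 : ℝ), t * a t ≤ Cb)
    (hlip : ∀ t ∈ Ici (0 : ℝ), ∃ V ∈ 𝓝[Ici (0 : ℝ)] t,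
      ∃ K, LipschitzOnWith K (fun s => s * a s) V)
    (f : ℝ → ℝ) (hf : Continuous f)
    (u : EuclideanSpace ℝ (Fin n) → ℝ)
    (hu2 : ContDiffOn ℝ 2 u Ω) (hucl : ContinuousOn u (closure Ω))
    (Du : EuclideanSpace ℝ (Fin n) → EuclideanSpace ℝ (Fin n))
    (hDu : ∀ x ∈ Ω, Du x = gradient u x) (hDuc : ContinuousOn Du (closure Ω))
    (hsol : IsWeakSolution a f Ω u)
    (hconst : ∀ p ∈ frontier Ω, ∀ q ∈ frontier Ω,
      ⟪Du p, η p⟫ ≠ 0 → ⟪Du q, η q⟫ ≠ 0 → u p = u q)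
    (C₀ : ℝ) (hC₀ : 0 ≤ C₀)
    (hfu : ∀ x ∈ Ω, -C₀ ≤ f (u x) ∧ f (u x) ≤ 0)
    (hinf : BddBelow (u '' Ω)) :
    ∃ C > (0 : ℝ), ∃ R₀ : ℝ, ∀ R ≥ R₀,
      ∫ x in Ω ∩ {x | Real.sqrt (‖x‖ ^ 2 + u x ^ 2) ≤ R},
          a ‖gradient u x‖ * ‖gradient u x‖ ^ 2
        ≤ C * (volume (Ω ∩ Metric.ball (0 : EuclideanSpace ℝ (Fin n)) (4 * R))).toReal := by
  classical
  obtain ⟨-, hΩo, -, hloc⟩ := hΩ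
  -- the boundary value
  obtain ⟨b, hb⟩ : ∃ b : ℝ, ∀ x ∈ frontier Ω, u x = b ∨ ⟪Du x, η x⟫ = 0 := by
    by_cases h : ∃ p ∈ frontier Ω, ⟪Du p, η p⟫ ≠ 0
    · obtain ⟨p, hp, hp'⟩ := h
      refine ⟨u p, fun x hx => ?_⟩
      by_cases hx' : ⟪Du x, η x⟫ = 0
      · exact Or.inr hx'
      · exact Or.inl (hconst x hx p hp hx' hp')
    · push Not at h
      exact ⟨0, fun x hx => Or.inr (h x hx)⟩
  obtain ⟨m, hm⟩ := hinf
  have hmu : ∀ x ∈ Ω, m ≤ u x := fun x hx => hm (mem_image_of_mem u hx)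
  obtain ⟨Cb, hCb⟩ := hbd
  set L : ℝ := max Cb 0 with hL
  have hL0 : 0 ≤ L := le_max_right _ _
  set D : ℝ := max (b - m) 0 with hD
  have hD0 : 0 ≤ D := le_max_right _ _
  -- the vector field
  set X : EuclideanSpace ℝ (Fin n) → EuclideanSpace ℝ (Fin n) := fun x => a ‖Du x‖ • Du x with hXdef
  have hac' : ContinuousOn (fun x => a ‖Du x‖) (closure Ω) :=
    hac.comp hDuc.norm (fun x _ => norm_nonneg _)
  have hX : ContinuousOn X (closure Ω) := hac'.smul hDuc
  have hXL : ∀ x, ‖X x‖ ≤ L := by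
    intro x
    simp only [hXdef]
    rw [norm_smul, Real.norm_of_nonneg (ha0 _ (norm_nonneg _))]
    rcases (norm_nonneg (Du x)).eq_or_lt with h0 | h0
    · rw [← h0, mul_zero]; exact hL0
    · rw [mul_comm]; exact (hCb _ h0).trans (le_max_left _ _)
  have hF : ContinuousOn (fun x => f (u x)) (closure Ω) := hf.comp_continuousOn hucl
  have hweak : ∀ Φ, IsTestOn Ω Φ →
      ∫ x in Ω, ⟪X x, gradient Φ x⟫ = ∫ x in Ω, f (u x) * Φ x := by
    intro Φ hΦ
    rw [← hsol Φ hΦ]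
    refine setIntegral_congr_fun hΩo.measurableSet fun x hx => ?_
    simp only [hXdef]
    rw [inner_smul_left, hDu x hx]; simp
  have hgu : ∀ x ∈ Ω, HasGradientAt u (Du x) x := by
    intro x hx
    rw [hDu x hx]
    exact ((hu2.differentiableOn (by simp)).differentiableAt (hΩo.mem_nhds hx)).hasGradientAt
  -- the cutoff
  obtain ⟨ψ₁, hψs, hψc, hψ1, hψ2, hψ0, hψle⟩ : ∃ ψ₁ : EuclideanSpace ℝ (Fin n) → ℝ,
      ContDiff ℝ 1 ψ₁ ∧ HasCompactSupport ψ₁ ∧ (∀ x, ‖x‖ ≤ 1 → ψ₁ x = 1) ∧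
      (∀ x, 2 ≤ ‖x‖ → ψ₁ x = 0) ∧ (∀ x, 0 ≤ ψ₁ x) ∧ (∀ x, ψ₁ x ≤ 1) := by
    let β : ContDiffBump (0 : EuclideanSpace ℝ (Fin n)) := ⟨1, 2, by norm_num, by norm_num⟩
    refine ⟨β, β.contDiff, β.hasCompactSupport, fun x hx => ?_, fun x hx => ?_,
      fun x => β.nonneg, fun x => β.le_one⟩
    · exact β.one_of_mem_closedBall (by simpa [β] using hx)
    · exact β.zero_of_le_dist (by simpa [β] using hx)
  obtain ⟨K, hK⟩ := hψs.lipschitzWith_of_hasCompactSupport hψc (by simp)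
  set C₁ : ℝ := C₀ * D + Real.pi * L * K with hC₁
  have hC₁0 : 0 ≤ C₁ := by
    have := Real.pi_pos
    positivity
  refine ⟨2 * C₁ + 1, by positivity, 1, fun R hR => ?_⟩
  have hR0 : 0 < R := by linarith
  -- the truncation
  set T : ℝ → ℝ := fun s => R * Real.arctan (s / R) with hT
  set T' : ℝ → ℝ := fun s => 1 / (1 + (s / R) ^ 2) with hT'
  have hTd : ∀ s, HasDerivAt T (T' s) s := by
    intro s
    have h1 : HasDerivAt (fun s : ℝ => s / R) (1 / R) s := (hasDerivAt_id s).div_const R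
    have h2 := ((Real.hasDerivAt_arctan (s / R)).comp s h1).const_mul R
    refine h2.congr_deriv ?_
    simp only [hT']
    field_simp
  have hT'0 : ∀ s, 0 ≤ T' s := fun s => by simp only [hT']; positivity
  have hT'1 : ∀ s, T' s ≤ 1 := fun s => by
    simp only [hT']
    rw [div_le_one (by positivity)]
    nlinarith [sq_nonneg (s / R)]
  have hT'half : ∀ s, |s| ≤ R → 1 / 2 ≤ T' s := fun s hs => by
    simp only [hT']
    have : (s / R) ^ 2 ≤ 1 := by
      rw [sq_le_one_iff_abs_le_one, abs_div, abs_of_pos hR0, div_le_one hR0]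
      exact hs
    apply one_div_le_one_div_of_le (by positivity)
    linarith
  have hT'c : Continuous T' := by
    simp only [hT']
    refine continuous_const.div (by fun_prop) (fun s => by positivity)
  have hTdiff : Differentiable ℝ T := fun s => (hTd s).differentiableAt
  have hTcd : ContDiff ℝ 1 T :=
    contDiff_const.mul (Real.contDiff_arctan.comp (contDiff_id.div_const R))
  have hTlip : ∀ s t, s ≤ t → T t - T s ≤ t - s := by
    intro s t hst
    have := image_sub_le_mul_sub_of_deriv_le hTdiff (C := 1)
      (fun x => by rw [(hTd x).deriv]; exact hT'1 x) hst
    linarith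
  have hTmono : Monotone T :=
    monotone_of_deriv_nonneg hTdiff (fun x => by rw [(hTd x).deriv]; exact hT'0 x)
  have hTbd : ∀ s, |T s| ≤ R * (Real.pi / 2) := by
    intro s
    simp only [hT]
    rw [abs_mul, abs_of_pos hR0]
    have h1 := Real.arctan_lt_pi_div_two (s / R)
    have h2 := Real.neg_pi_div_two_lt_arctan (s / R)
    have : |Real.arctan (s / R)| ≤ Real.pi / 2 := abs_le.mpr ⟨by linarith, by linarith⟩
    gcongr
  set h : EuclideanSpace ℝ (Fin n) → ℝ := fun x => T (u x) - T b with hh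
  set H : EuclideanSpace ℝ (Fin n) → EuclideanSpace ℝ (Fin n) := fun x => T' (u x) • Du x with hH
  have hhc : ContinuousOn h (closure Ω) :=
    (hTdiff.continuous.comp_continuousOn hucl).sub continuousOn_const
  have hHc : ContinuousOn H (closure Ω) := (hT'c.comp_continuousOn hucl).smul hDuc
  have hh1 : ContDiffOn ℝ 1 h Ω :=
    (hTcd.comp_contDiffOn (hu2.of_le (by norm_num))).sub contDiffOn_const
  have hhH : ∀ x ∈ Ω, HasGradientAt h (H x) x := fun x hx =>
    hasGradientAt_comp_aux (T := fun s => T s - T b) ((hTd (u x)).sub_const _) (hgu x hx)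
  have hhbd : ∀ x, |h x| ≤ R * Real.pi := by
    intro x
    have h1 := hTbd (u x)
    have h2 := hTbd b
    have h3 : |T (u x) - T b| ≤ |T (u x)| + |T b| := abs_sub _ _
    simp only [hh]
    linarith
  have hhlow : ∀ x ∈ Ω, -D ≤ h x := by
    intro x hx
    simp only [hh]
    rcases le_total b (u x) with h1 | h1
    · linarith [hTmono h1]
    · have := hTlip _ _ h1
      linarith [hmu x hx, le_max_left (b - m) 0]
  -- local Green identities
  have hlocal : ∀ p : EuclideanSpace ℝ (Fin n), ∃ U, IsOpen U ∧ p ∈ U ∧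
      ∀ θ : EuclideanSpace ℝ (Fin n) → ℝ, ContDiff ℝ 1 θ → HasCompactSupport θ → tsupport θ ⊆ U →
        ∫ x in Ω, greenI X H h (fun x => f (u x)) θ x = 0 := by
    intro p
    by_cases hpc : p ∈ closure Ω
    · by_cases hpΩ : p ∈ Ω
      · exact ⟨Ω, hΩo, hpΩ, fun θ hθ hθc hs =>
          green_interior hΩo hX hHc hhc hF hh1 hhH hweak hθ hθc hs⟩
      · have hpf : p ∈ frontier Ω := by rw [hΩo.frontier_eq]; exact ⟨hpc, hpΩ⟩
        obtain ⟨V, g, hV, hpV, hg, hgn, hΩV, -⟩ := hloc p hpf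
        have hg1 : ContDiffOn ℝ 1 g V := by exact_mod_cast hg
        refine green_boundary hΩo hX hHc hhc hF hh1 hhH hweak hV hpV hg1 (hgn p hpV) hΩV ?_
        intro x hxf hxV
        rcases hb x hxf with hxb | hxη
        · simp [hh, hxb]
        · obtain ⟨V', g', hV', hxV', hg', hgn', hΩV', hη⟩ := hloc x hxf
          have hg1' : ContDiffOn ℝ 1 g' V' := by exact_mod_cast hg'
          have hxcl : x ∈ closure Ω := frontier_subset_closure hxf
          have hxn : x ∉ Ω := by rw [hΩo.frontier_eq] at hxf; exact hxf.2
          have z : g x = 0 := le_antisymm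
            (defining_le_zero hV hxV hg1.continuousOn hΩV hxcl) (defining_ge_zero hxV hΩV hxn)
          have z' : g' x = 0 := le_antisymm
            (defining_le_zero hV' hxV' hg1'.continuousOn hΩV' hxcl)
            (defining_ge_zero hxV' hΩV' hxn)
          have hY : ⟪Du x, gradient g' x⟫ = 0 := by
            rw [hη, inner_neg_right, inner_smul_right, neg_eq_zero] at hxη
            rcases mul_eq_zero.mp hxη with h0 | h0
            · exact absurd (norm_eq_zero.mp (inv_eq_zero.mp h0)) (hgn' x hxV')
            · exact h0
          have := normal_unique_aux hV hV' hxV hxV'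
            ((hg1.differentiableOn (by simp)).differentiableAt (hV.mem_nhds hxV))
            ((hg1'.differentiableOn (by simp)).differentiableAt (hV'.mem_nhds hxV'))
            z z' (hgn' x hxV') hΩV hΩV' hY
          simp only [hXdef]
          rw [inner_smul_left, this, mul_zero, mul_zero]
    · refine ⟨(closure Ω)ᶜ, isClosed_closure.isOpen_compl, hpc, fun θ hθ hθc hs => ?_⟩
      rw [setIntegral_congr_fun (g := fun _ => (0:ℝ)) hΩo.measurableSet]
      · simp
      · intro x hx
        exact greenI_zero fun hxt => hs hxt (subset_closure hx)
  -- the global test function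
  set ψ : EuclideanSpace ℝ (Fin n) → ℝ := fun x => ψ₁ (R⁻¹ • x) with hψ
  have hnR : ∀ x : EuclideanSpace ℝ (Fin n), ‖R⁻¹ • x‖ = ‖x‖ / R := by
    intro x
    rw [norm_smul, norm_inv, Real.norm_of_nonneg hR0.le]; field_simp
  have hψcd : ContDiff ℝ 1 ψ := hψs.comp (contDiff_const_smul _)
  have hψsupp : tsupport ψ ⊆ closedBall 0 (2 * R) := by
    refine closure_minimal ?_ isClosed_closedBall
    intro x hx
    rw [mem_closedBall_zero_iff]
    by_contra! hcon
    refine hx (hψ2 _ ?_)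
    rw [hnR, le_div_iff₀ hR0]; exact hcon.le
  have hψcs : HasCompactSupport ψ :=
    (isCompact_closedBall _ _).of_isClosed_subset (isClosed_tsupport _) hψsupp
  have hψgrad : ∀ x, ‖gradient ψ x‖ ≤ K / R := by
    intro x
    have h1 : LipschitzWith (K * ‖R⁻¹‖₊) ψ := hK.comp (lipschitzWith_smul R⁻¹)
    have h2 := norm_fderiv_le_of_lipschitz ℝ h1 (x₀ := x)
    have h3 : ‖gradient ψ x‖ = ‖fderiv ℝ ψ x‖ := LinearIsometryEquiv.norm_map _ _
    rw [h3]
    refine h2.trans (le_of_eq ?_)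
    push_cast
    rw [norm_inv, Real.norm_of_nonneg hR0.le]; rfl
  have hgreen := green_global hΩo hX hHc hhc hF hlocal hψcd hψcs
  -- splitting the identity
  have hψcont : ContinuousOn ψ (closure Ω) := hψcd.continuous.continuousOn
  have hψgc : ContinuousOn (gradient ψ) (closure Ω) :=
    (continuousOn_gradient_aux isOpen_univ hψcd.contDiffOn).mono (subset_univ _)
  set P : EuclideanSpace ℝ (Fin n) → ℝ :=
    fun x => ψ x * T' (u x) * (a ‖Du x‖ * ‖Du x‖ ^ 2) with hP
  set Q : EuclideanSpace ℝ (Fin n) → ℝ :=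
    fun x => f (u x) * h x * ψ x - h x * ⟪X x, gradient ψ x⟫ with hQ
  have hPc : ContinuousOn P (closure Ω) :=
    (hψcont.mul (hT'c.comp_continuousOn hucl)).mul (hac'.mul (hDuc.norm.pow 2))
  have hQc : ContinuousOn Q (closure Ω) :=
    ((hF.mul hhc).mul hψcont).sub (hhc.mul (hX.inner hψgc))
  have hP0 : ∀ x, x ∉ tsupport ψ → P x = 0 := fun x hx => by
    simp [hP, image_eq_zero_of_notMem_tsupport hx]
  have hQ0 : ∀ x, x ∉ tsupport ψ → Q x = 0 := fun x hx => by
    simp only [hQ]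
    rw [image_eq_zero_of_notMem_tsupport hx, gradient_eq_zero_of_notMem_tsupport hx,
      inner_zero_right]
    ring
  have hPi : IntegrableOn P Ω := integrableOn_aux hΩo hψcs hPc hP0
  have hQi : IntegrableOn Q Ω := integrableOn_aux hΩo hψcs hQc hQ0
  have hPQ : ∫ x in Ω, P x = ∫ x in Ω, Q x := by
    have e1 : ∀ x, greenI X H h (fun x => f (u x)) ψ x = P x - Q x := by
      intro x
      simp only [greenI, hP, hQ, hH, hXdef, inner_add_right, inner_smul_right, inner_smul_left,
        real_inner_self_eq_norm_sq]
      simp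
      ring
    simp only [e1] at hgreen
    rw [integral_sub hPi hQi] at hgreen
    linarith
  have hPnn : ∀ x, 0 ≤ P x := fun x =>
    mul_nonneg (mul_nonneg (hψ0 _) (hT'0 _)) (mul_nonneg (ha0 _ (norm_nonneg _)) (sq_nonneg _))
  -- upper bound of `Q`
  have hQle : ∀ x ∈ Ω, Q x ≤ C₁ := by
    intro x hx
    have h1 : f (u x) * h x * ψ x ≤ C₀ * D := by
      obtain ⟨f1, f2⟩ := hfu x hx
      have l1 := hhlow x hx
      have l2 : f (u x) * h x ≤ C₀ * D := by
        have a1 : f (u x) * h x ≤ f (u x) * (-D) := mul_le_mul_of_nonpos_left l1 f2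
        have a2 : f (u x) * (-D) ≤ C₀ * D := by nlinarith
        linarith
      have p0 : 0 ≤ ψ x := hψ0 _
      have p1 : ψ x ≤ 1 := hψle _
      have hCD : 0 ≤ C₀ * D := by positivity
      calc f (u x) * h x * ψ x ≤ C₀ * D * ψ x := by gcongr
        _ ≤ C₀ * D := mul_le_of_le_one_right hCD p1
    have h2 : |h x * ⟪X x, gradient ψ x⟫| ≤ Real.pi * L * K := by
      rw [abs_mul]
      have i1 : |⟪X x, gradient ψ x⟫| ≤ L * (K / R) :=
        (abs_real_inner_le_norm _ _).trans
          (mul_le_mul (hXL x) (hψgrad x) (norm_nonneg _) hL0)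
      calc |h x| * |⟪X x, gradient ψ x⟫| ≤ (R * Real.pi) * (L * (K / R)) :=
            mul_le_mul (hhbd x) i1 (abs_nonneg _) (by have := Real.pi_pos; positivity)
        _ = Real.pi * L * K := by field_simp
    have h3 := (abs_le.mp h2).1
    simp only [hQ, hC₁]
    linarith
  set Ω' : Set (EuclideanSpace ℝ (Fin n)) := Ω ∩ ball 0 (4 * R) with hΩ'
  have hΩ'm : MeasurableSet Ω' := hΩo.measurableSet.inter measurableSet_ball
  have hΩ'f : volume Ω' ≠ ∞ := ((measure_mono inter_subset_right).trans_lt measure_ball_lt_top).ne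
  have hQint : ∫ x in Ω, Q x ≤ C₁ * (volume Ω').toReal := by
    rw [setIntegral_eq_of_subset_of_forall_sdiff_eq_zero (s := Ω') hΩo.measurableSet
      inter_subset_left (fun x hx => hQ0 x fun hxt => hx.2 ⟨hx.1, by
        have := mem_closedBall_zero_iff.mp (hψsupp hxt)
        rw [mem_ball_zero_iff]; linarith⟩)]
    calc ∫ x in Ω', Q x ≤ ∫ x in Ω', C₁ :=
          setIntegral_mono_on (hQi.mono_set inter_subset_left)
            (integrableOn_const hΩ'f) hΩ'm (fun x hx => hQle x hx.1)
      _ = C₁ * (volume Ω').toReal := by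
          rw [setIntegral_const, smul_eq_mul, mul_comm]; rfl
  -- the sublevel set
  set s : Set (EuclideanSpace ℝ (Fin n)) :=
    Ω ∩ {x | Real.sqrt (‖x‖ ^ 2 + u x ^ 2) ≤ R} with hs
  have hsm : MeasurableSet s := by
    have hc : ContinuousOn (fun x => Real.sqrt (‖x‖ ^ 2 + u x ^ 2)) Ω :=
      Real.continuous_sqrt.comp_continuousOn
        ((continuous_norm.continuousOn.pow 2).add ((hu2.continuousOn).pow 2))
    have ho := hc.isOpen_inter_preimage hΩo (isOpen_Ioi (a := R))
    have : s = Ω \ (Ω ∩ (fun x => Real.sqrt (‖x‖ ^ 2 + u x ^ 2)) ⁻¹' Ioi R) := by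
      ext x
      simp only [hs, mem_inter_iff, Set.mem_ofPred_eq, Set.mem_sdiff, mem_preimage, mem_Ioi, not_and, not_lt]
      tauto
    rw [this]
    exact hΩo.measurableSet.diff ho.measurableSet
  have hsΩ : s ⊆ Ω := inter_subset_left
  have hsx : ∀ x ∈ s, ‖x‖ ≤ R ∧ |u x| ≤ R := by
    intro x hx
    have h1 : Real.sqrt (‖x‖ ^ 2 + u x ^ 2) ≤ R := hx.2
    rw [Real.sqrt_le_left hR0.le] at h1
    constructor
    · exact abs_le_of_sq_le_sq' (by nlinarith [sq_nonneg (u x)]) hR0.le |>.2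
    · exact abs_le_of_sq_le_sq (by nlinarith [sq_nonneg ‖x‖]) hR0.le
  have hpt : ∀ x ∈ s, a ‖gradient u x‖ * ‖gradient u x‖ ^ 2 ≤ 2 * P x := by
    intro x hx
    obtain ⟨h1, h2⟩ := hsx x hx
    rw [← hDu x (hsΩ hx)]
    have h3 : ψ x = 1 := hψ1 _ (by rw [hnR, div_le_one hR0]; exact h1)
    have h4 := hT'half _ h2
    have h5 : 0 ≤ a ‖Du x‖ * ‖Du x‖ ^ 2 := mul_nonneg (ha0 _ (norm_nonneg _)) (sq_nonneg _)
    simp only [hP]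
    rw [h3]
    nlinarith
  have hsi : IntegrableOn (fun x => a ‖gradient u x‖ * ‖gradient u x‖ ^ 2) s := by
    have i1 : IntegrableOn (fun x => a ‖Du x‖ * ‖Du x‖ ^ 2) (closure Ω ∩ closedBall 0 R) :=
      ContinuousOn.integrableOn_compact ((isCompact_closedBall _ _).inter_left isClosed_closure)
        ((hac'.mul (hDuc.norm.pow 2)).mono inter_subset_left)
    have i2 := i1.mono_set (s := s) (fun x hx =>
      ⟨subset_closure (hsΩ hx), mem_closedBall_zero_iff.mpr (hsx x hx).1⟩)
    refine i2.congr_fun (fun x hx => ?_) hsm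
    simp only [hDu x (hsΩ hx)]
  have hPs : ∫ x in s, 2 * P x ≤ 2 * ∫ x in Ω, P x := by
    rw [integral_const_mul]
    have := setIntegral_mono_set (s := s) hPi (Eventually.of_forall hPnn)
      (HasSubset.Subset.eventuallyLE hsΩ)
    linarith
  have hmain := setIntegral_mono_on hsi ((hPi.mono_set hsΩ).const_mul 2) hsm hpt
  have hvol0 : 0 ≤ (volume Ω').toReal := ENNReal.toReal_nonneg
  calc _ ≤ ∫ x in s, 2 * P x := hmain
    _ ≤ 2 * ∫ x in Ω, P x := hPs
    _ ≤ 2 * (C₁ * (volume Ω').toReal) := by rw [hPQ]; gcongr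
    _ ≤ (2 * C₁ + 1) * (volume Ω').toReal := by linarith
end
end
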